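/- arXiv:2003.07265 — 3 statements merged into one kernel-verified Lean document; each statement's English description precedes it below -/
import Mathlib

section
/- Let Ω ⊂ ℝⁿ be a bounded domain with B̄(x0,1) ⊆ Ω and d̂(x0) ≥ 15, let (γ_y)_{y∈Ω̂} be a path system, let μ0 be a nontrivial finite positive Radon measure on Ω satisfying d_Ω̂ ∈ L¹(μ0), and define the weight w0(x) := I1μ0(x) + ω(x) d̂(x)^{−n+1}. Then for every κ > 0 and every finite signed Radon measure μ on Ω with μ(Ω) = 0 and |μ| ≤ κ μ0, there exists a measurable vector field u : Ω → ℝⁿ with |u| ≤ C κ w0 almost everywhere on Ω such that ∫_Ω u·∇φ dx = −∫_Ω φ dμ for every Lipschitz function φ : ℝⁿ → ℝ. -/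
open MeasureTheory Metric Set
open scoped RealInnerProductSpace ENNReal NNReal

noncomputable section

/-- `ℝⁿ` as a Euclidean space. -/
abbrev En (n : ℕ) := EuclideanSpace ℝ (Fin n)

/-- The geodesic distance, within the set `U`, from the point `x` to the base point `x0`:
the infimum of the lengths (total variations) of rectifiable curves joining `x` to `x0`
inside `U` (non-rectifiable curves have infinite length, so they do not affect the
infimum). -/
def geoDist {X : Type*} [PseudoEMetricSpace X] (U : Set X) (x0 x : X) : ℝ≥0∞ :=
  ⨅ (γ : ℝ → X) (_ : ContinuousOn γ (Set.Icc 0 1)) (_ : Set.MapsTo γ (Set.Icc 0 1) U)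
    (_ : γ 0 = x) (_ : γ 1 = x0), eVariationOn γ (Set.Icc 0 1)

/-- The open measurable cover `Ω̂` associated with a measurable cover `Ω̃`:
`Ω̂ = {x ∈ Ω̃ : dist(x, ℝⁿ \ Ω̃) > 0}`. -/
def hatSet {n : ℕ} (Ot : Set (En n)) : Set (En n) :=
  {x ∈ Ot | 0 < Metric.infDist x Otᶜ}

/-- The integral `∫_s f dμ` of a function against a signed measure, defined through the
Jordan decomposition of `μ`. -/
def signedIntegral {n : ℕ} (μ : MeasureTheory.SignedMeasure (En n)) (s : Set (En n))
    (f : En n → ℝ) : ℝ :=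
  (∫ x in s, f x ∂μ.toJordanDecomposition.posPart) -
    ∫ x in s, f x ∂μ.toJordanDecomposition.negPart

/-- A Bogovskii path system on `Ω̂ = U`: a measurable family of rectifiable curves
`γ_y` joining each `y ∈ U` to the base point `x0` inside `U`, with Ahlfors-type
length bounds and uniform interiority. -/
structure PathSystem {n : ℕ} (Ω U : Set (En n)) (x0 : En n) : Type where
  γ : En n → ℝ → En n
  contOn : ∀ y ∈ U, ContinuousOn (γ y) (Set.Icc 0 1)
  mapsTo : ∀ y ∈ U, ∀ t ∈ Set.Icc (0:ℝ) 1, γ y t ∈ U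
  start : ∀ y ∈ U, γ y 0 = y
  ends : ∀ y ∈ U, γ y 1 = x0
  rectifiable : ∀ y ∈ U, eVariationOn (γ y) (Set.Icc 0 1) < ⊤
  meas : Measurable fun q : ℝ × En n => γ q.2 q.1
  C : ℝ
  Cpos : 0 < C
  ball_len : ∀ x ∈ Ω, ∀ y ∈ Ω, ∀ r : ℝ, r ≤ Metric.infDist x Uᶜ / 2 →
    eVariationOn (γ y) {t ∈ Set.Icc (0:ℝ) 1 | γ y t ∈ Metric.ball x r} ≤
      ENNReal.ofReal (C * r)
  total_len : ∀ y ∈ U, eVariationOn (γ y) (Set.Icc 0 1) ≤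
      ENNReal.ofReal C * geoDist U x0 y
  unif : ∃ ε0 : ℝ, 0 < ε0 ∧ ∀ ε : ℝ, 0 < ε → ε < ε0 → ∃ δ : ℝ, 0 < δ ∧
      ∀ y ∈ U, ε < Metric.infDist y Uᶜ →
        ∀ t ∈ Set.Icc (0:ℝ) 1, δ < Metric.infDist (γ y t) Uᶜ

/-- The localized Riesz potential `I₁μ0(x) = ∫_Ω |x − y|^{1−n} dμ0(y)` (with value `∞`
allowed). -/
def I1 {n : ℕ} (μ0 : MeasureTheory.Measure (En n)) (Ω : Set (En n)) (x : En n) : ℝ≥0∞ :=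
  ∫⁻ y in Ω, (edist x y) ^ ((1:ℝ) - n) ∂μ0

/-- `ω(x) = μ0({y ∈ Ω : ∃ t ∈ [0,1], |γ_y(t) − x| ≤ d̂(x)/2})`. -/
def omegaFn {n : ℕ} (μ0 : MeasureTheory.Measure (En n)) (Ω U : Set (En n))
    (γ : En n → ℝ → En n) (x : En n) : ℝ≥0∞ :=
  μ0 {y ∈ Ω | ∃ t ∈ Set.Icc (0:ℝ) 1, dist (γ y t) x ≤ Metric.infDist x Uᶜ / 2}

/-- The weight `w0(x) = I₁μ0(x) + ω(x) d̂(x)^{1−n}`. -/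
def wZero {n : ℕ} (μ0 : MeasureTheory.Measure (En n)) (Ω U : Set (En n))
    (γ : En n → ℝ → En n) (x : En n) : ℝ≥0∞ :=
  I1 μ0 Ω x + omegaFn μ0 Ω U γ x * (ENNReal.ofReal (Metric.infDist x Uᶜ)) ^ ((1:ℝ) - n)

/-!
Write `a` for the mean of a Lipschitz function `φ` over a small ball around `x0`. Comparing the
means of `φ` over balls centred on `γ_y`, with radii proportional to the distance to the
complement, gives the pointwise bound `|φ(y) - a| ≤ M ∫_Ω |∇φ(x)| k(x, y) dx`. Here `k(x, y)` is
the sum of the Riesz kernel `|x - y|^{1-n}`, coming from the shrinking balls at `y`, and of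
`d̂(x)^{1-n}` for those `x` within `d̂(x) / 2` of `γ_y`. Since `μ(Ω) = 0`, integrating this bound
against `μ` yields `|∫_Ω φ dμ| ≤ M κ ∫_Ω |∇φ| w` with `w ≤ w0`. The length bound on `γ_y` and
`d_Ω̂ ∈ L¹(μ0)` make `w` integrable, so `∇φ ↦ -∫_Ω φ dμ` is a functional of norm at most `M κ` on
the gradients in `L¹(w dx)`; extending it by Hahn–Banach and representing it by a bounded field
`h`, one takes `u = w h`.
-/

section Curves

lemma sum_edist_filter_le_eVariationOn {X : Type*} [PseudoEMetricSpace X] (γ : ℝ → X) {S : Set ℝ}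
    {t : ℕ → ℝ} (ht : Monotone t) (sel : ℕ → Prop) [DecidablePred sel] (N : ℕ)
    (hsel : ∀ i < N, sel i → t i ∈ S ∧ t (i + 1) ∈ S) :
    ∑ i ∈ Finset.range N with sel i, edist (γ (t i)) (γ (t (i + 1)))
      ≤ eVariationOn γ (S ∩ Iic (t N)) := by
  rw [Finset.sum_filter]
  induction N with
  | zero => simp
  | succ N ih =>
    have hstep : (if sel N then edist (γ (t N)) (γ (t (N + 1))) else 0)
        ≤ eVariationOn γ (S ∩ Icc (t N) (t (N + 1))) := by
      split_ifs with hN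
      · obtain ⟨hl, hr⟩ := hsel N N.lt_succ_self hN
        exact eVariationOn.edist_le γ ⟨hl, left_mem_Icc.2 (ht N.le_succ)⟩
          ⟨hr, right_mem_Icc.2 (ht N.le_succ)⟩
      · exact zero_le
    rw [Finset.sum_range_succ]
    calc _ ≤ eVariationOn γ (S ∩ Iic (t N)) + eVariationOn γ (S ∩ Icc (t N) (t (N + 1))) :=
          add_le_add (ih fun i hi => hsel i (hi.trans N.lt_succ_self)) hstep
      _ ≤ eVariationOn γ (S ∩ Iic (t N) ∪ S ∩ Icc (t N) (t (N + 1))) :=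
          eVariationOn.add_le_union γ fun _ hx _ hy => hx.2.trans hy.2.1
      _ ≤ eVariationOn γ (S ∩ Iic (t (N + 1))) := eVariationOn.mono γ <|
          union_subset (inter_subset_inter_right S (Iic_subset_Iic.2 (ht N.le_succ)))
            (inter_subset_inter_right S Icc_subset_Iic_self)

variable {X : Type*} [PseudoMetricSpace X]

lemma exists_fine_partition {γ : ℝ → X} (hγ : ContinuousOn γ (Icc 0 1)) {η : ℝ} (hη : 0 < η) :
    ∃ (N : ℕ) (t : ℕ → ℝ), Monotone t ∧ t 0 = 0 ∧ t N = 1 ∧ (∀ i, t i ∈ Icc (0 : ℝ) 1) ∧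
      (∀ i, dist (γ (t i)) (γ (t (i + 1))) < η) ∧
      ∀ s ∈ Icc (0 : ℝ) 1, ∃ i ≤ N, dist (γ (t i)) (γ s) < η := by
  have hcont : Continuous (fun s : Icc (0 : ℝ) 1 => γ s) := hγ.domRestrict
  obtain ⟨t, ht0, htmono, ⟨N, hN⟩, hcover⟩ :=
    exists_monotone_Icc_subset_open_cover_Icc (zero_le_one (α := ℝ))
      (c := fun c : Icc (0 : ℝ) 1 => {s | dist (γ s) (γ c) < η / 2})
      (fun c => isOpen_lt (hcont.dist continuous_const) continuous_const)
      (fun c _ => mem_iUnion.2 ⟨c, by simpa using half_pos hη⟩)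
  have hfine : ∀ i, ∀ s ∈ Icc (t i) (t (i + 1)), dist (γ (t i)) (γ s) < η := fun i s hs => by
    obtain ⟨c, hc⟩ := hcover i
    have hleft : dist (γ (t i)) (γ c) < η / 2 := hc (left_mem_Icc.2 (htmono i.le_succ))
    have hright : dist (γ s) (γ c) < η / 2 := hc hs
    linarith [dist_triangle_right (γ (t i)) (γ s) (γ c)]
  refine ⟨N, fun i => t i, htmono, ht0, hN N le_rfl, fun i => (t i).2,
    fun i => hfine i _ ⟨htmono i.le_succ, le_rfl⟩, fun s hs => ?_⟩
  have hex : ∃ i, (⟨s, hs⟩ : Icc (0 : ℝ) 1) ≤ t i :=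
    ⟨N, Subtype.coe_le_coe.1 (by rw [hN N le_rfl]; exact hs.2)⟩
  have hfind : Nat.find hex ≤ N := Nat.find_min' hex
    (Subtype.coe_le_coe.1 (by rw [hN N le_rfl]; exact hs.2))
  rcases hi : Nat.find hex with _ | i
  · have hs0 : (⟨s, hs⟩ : Icc (0 : ℝ) 1) ≤ t 0 := hi ▸ Nat.find_spec hex
    have : s = t 0 := le_antisymm hs0 (ht0.trans_le hs.1)
    exact ⟨0, N.zero_le, by simpa [← this] using hη⟩
  · refine ⟨i, by omega, hfine i ⟨s, hs⟩ ⟨le_of_not_ge fun h => ?_, hi ▸ Nat.find_spec hex⟩⟩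
    exact Nat.find_min hex (by omega) h

lemma mem_ball_quarter_of_mem_ball {f : X → ℝ} (hf : LipschitzWith 1 f) {p p' x : X}
    (hx : x ∈ ball p (f p / 8)) (hclose : dist p p' < f p / 64) : p' ∈ ball x (f x / 4) := by
  have hfp : f p ≤ f x + dist p x := by simpa using hf.le_add_mul p x
  rw [mem_ball] at hx ⊢
  linarith [hclose, dist_nonneg (x := x) (y := p), dist_comm p x, dist_triangle_left p' x p]

lemma sum_indicator_ball_edist_le {f : X → ℝ} (hf : LipschitzWith 1 f) {γ : ℝ → X} {t : ℕ → ℝ}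
    (ht : Monotone t) (htmem : ∀ i, t i ∈ Icc (0 : ℝ) 1)
    (hfine : ∀ i, dist (γ (t i)) (γ (t (i + 1))) < f (γ (t i)) / 64) (N : ℕ) (x : X) :
    ∑ i ∈ Finset.range N, (ball (γ (t i)) (f (γ (t i)) / 8)).indicator
        (fun _ => edist (γ (t i)) (γ (t (i + 1)))) x ≤
      eVariationOn γ {τ ∈ Icc 0 1 | γ τ ∈ ball x (f x / 4)} := by
  classical
  have hpos : ∀ i, 0 < f (γ (t i)) / 64 := fun i => dist_nonneg.trans_lt (hfine i)
  simp only [indicator_apply]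
  rw [← Finset.sum_filter]
  refine (sum_edist_filter_le_eVariationOn γ ht _ N fun i _ hx => ?_).trans
    (eVariationOn.mono γ inter_subset_left)
  refine ⟨⟨htmem _, ?_⟩, htmem _, ?_⟩
  · exact mem_ball_quarter_of_mem_ball hf hx (by simpa using hpos i)
  · exact mem_ball_quarter_of_mem_ball hf hx (hfine i)

lemma exists_partition_dist_lt {f : X → ℝ} (hf : Continuous f) {γ : ℝ → X}
    (hγ : ContinuousOn γ (Icc 0 1)) (hpos : ∀ t ∈ Icc (0 : ℝ) 1, 0 < f (γ t)) :
    ∃ (N : ℕ) (t : ℕ → ℝ), Monotone t ∧ t 0 = 0 ∧ t N = 1 ∧ (∀ i, t i ∈ Icc (0 : ℝ) 1) ∧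
      (∀ i, dist (γ (t i)) (γ (t (i + 1))) < f (γ (t i)) / 64) ∧
      ∀ s ∈ Icc (0 : ℝ) 1, ∃ i ≤ N, dist (γ (t i)) (γ s) < f (γ s) / 64 := by
  obtain ⟨m, hm, hmle⟩ : ∃ m, 0 < m ∧ ∀ s ∈ Icc (0 : ℝ) 1, m ≤ f (γ s) :=
    isCompact_Icc.exists_forall_le' (hf.comp_continuousOn hγ) hpos
  obtain ⟨N, t, ht, ht0, htN, htmem, hfine, hdense⟩ :=
    exists_fine_partition hγ (show 0 < m / 64 by linarith)
  refine ⟨N, t, ht, ht0, htN, htmem, fun i => (hfine i).trans_le ?_, fun s hs => ?_⟩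
  · linarith [hmle _ (htmem i)]
  · obtain ⟨i, hi, hlt⟩ := hdense s hs
    exact ⟨i, hi, by linarith [hmle s hs]⟩

end Curves

section HaarAffine

open Module

variable {E : Type*} [NormedAddCommGroup E] [NormedSpace ℝ E] [FiniteDimensional ℝ E]
  [MeasurableSpace E] [BorelSpace E] (μ : Measure E) [μ.IsAddHaarMeasure]

lemma lintegral_comp_add_smul (h : E → ℝ≥0∞) (p : E) {s : ℝ} (hs : s ≠ 0) :
    ∫⁻ z, h (p + s • z) ∂μ = ENNReal.ofReal |(s ^ finrank ℝ E)⁻¹| * ∫⁻ x, h x ∂μ := by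
  calc ∫⁻ z, h (p + s • z) ∂μ = ∫⁻ x, h (p + x) ∂(μ.map (s • ·)) :=
        (lintegral_map_equiv (fun x => h (p + x))
          (Homeomorph.smulOfNeZero s hs).toMeasurableEquiv).symm
    _ = ENNReal.ofReal |(s ^ finrank ℝ E)⁻¹| * ∫⁻ x, h x ∂μ := by
        rw [Measure.map_addHaar_smul μ hs, lintegral_smul_measure, smul_eq_mul,
          lintegral_add_left_eq_self]

lemma setLIntegral_ball_comp_add_smul (h : E → ℝ≥0∞) (p : E) {s : ℝ} (hs : 0 < s) :
    ∫⁻ z in ball 0 1, h (p + s • z) ∂μ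
      = ENNReal.ofReal (s ^ finrank ℝ E)⁻¹ * ∫⁻ x in ball p s, h x ∂μ := by
  rw [← lintegral_indicator measurableSet_ball, ← lintegral_indicator measurableSet_ball,
    ← abs_of_pos (inv_pos.2 (pow_pos hs (finrank ℝ E))), ← lintegral_comp_add_smul μ _ p hs.ne']
  refine lintegral_congr fun z => ?_
  have hmem : z ∈ ball (0 : E) 1 ↔ p + s • z ∈ ball p s := by
    rw [mem_ball_zero_iff, mem_ball, dist_self_add_left, norm_smul, Real.norm_of_nonneg hs.le,
      mul_lt_iff_lt_one_right hs]
  by_cases hz : z ∈ ball (0 : E) 1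
  · rw [indicator_of_mem hz, indicator_of_mem (hmem.1 hz)]
  · rw [indicator_of_notMem hz, indicator_of_notMem (mt hmem.2 hz)]

lemma setLAverage_ball_comp_add_smul (h : E → ℝ≥0∞) (p : E) {s : ℝ} (hs : 0 < s) :
    ⨍⁻ z in ball 0 1, h (p + s • z) ∂μ = ⨍⁻ x in ball p s, h x ∂μ := by
  rw [setLAverage_eq, setLAverage_eq, setLIntegral_ball_comp_add_smul μ h p hs,
    Measure.addHaar_ball_of_pos μ p hs, ENNReal.ofReal_inv_of_pos (by positivity),
    ENNReal.div_eq_inv_mul, ENNReal.div_eq_inv_mul, ENNReal.mul_inv (.inr measure_ball_lt_top.ne)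
      (.inl ENNReal.ofReal_ne_top)]
  ring

lemma ae_comp_add_smul {Q : E → Prop} (hQ : ∀ᵐ x ∂μ, Q x) (p : E) {s : ℝ} (hs : s ≠ 0) :
    ∀ᵐ z ∂μ, Q (p + s • z) := by
  have htranslate : ∀ᵐ x ∂μ, Q (p + x) :=
    (measurePreserving_add_left μ p).quasiMeasurePreserving.ae hQ
  rw [ae_iff] at htranslate ⊢
  exact (Measure.addHaar_preimage_smul μ hs {x | ¬ Q (p + x)}).trans (by rw [htranslate, mul_zero])

end HaarAffine

section BallMean

lemma enorm_sub_le_lintegral_deriv {g : ℝ → ℝ} {K : ℝ≥0} (hg : LipschitzWith K g) :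
    ‖g 1 - g 0‖ₑ ≤ ∫⁻ τ in Ioo 0 1, ‖deriv g τ‖ₑ := by
  rw [← (hg.lipschitzOnWith.absolutelyContinuousOnInterval).integral_deriv_eq_sub,
    intervalIntegral.integral_of_le zero_le_one, integral_Ioc_eq_integral_Ioo]
  exact enorm_integral_le_lintegral_enorm _

variable {E : Type*} [NormedAddCommGroup E] [NormedSpace ℝ E]

lemma enorm_deriv_comp_segment_le {φ : E → ℝ} {p v : E} {τ : ℝ}
    (h : DifferentiableAt ℝ φ (p + τ • v)) :
    ‖deriv (fun t : ℝ => φ (p + t • v)) τ‖ₑ ≤ ‖fderiv ℝ φ (p + τ • v)‖ₑ * ‖v‖ₑ := by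
  have hline : HasDerivAt (fun t : ℝ => p + t • v) v τ := by
    simpa using ((hasDerivAt_id τ).smul_const v).const_add p
  have hcomp : HasDerivAt (fun t : ℝ => φ (p + t • v)) (fderiv ℝ φ (p + τ • v) v) τ :=
    h.hasFDerivAt.comp_hasDerivAt τ hline
  rw [hcomp.deriv]
  exact (fderiv ℝ φ (p + τ • v)).le_opENorm v

lemma lipschitzWith_comp_segment {φ : E → ℝ} {K : ℝ≥0} (hφ : LipschitzWith K φ) (p v : E) :
    LipschitzWith (K * ‖v‖₊) fun t : ℝ => φ (p + t • v) :=
  hφ.comp <| LipschitzWith.of_dist_le_mul fun a b => by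
    rw [dist_add_left, dist_eq_norm, ← sub_smul, norm_smul, mul_comm, dist_eq_norm, coe_nnnorm]

lemma enorm_add_smul_le_of_mem_ball (q : E) (r : ℝ) {z : E} (hz : z ∈ ball (0 : E) 1) :
    ‖q + r • z‖ₑ ≤ ENNReal.ofReal (‖q‖ + |r|) := by
  rw [← ofReal_norm]
  refine ENNReal.ofReal_le_ofReal ((norm_add_le _ _).trans ?_)
  rw [norm_smul, Real.norm_eq_abs]
  gcongr
  exact mul_le_of_le_one_right (abs_nonneg r) (mem_ball_zero_iff.1 hz).le

variable [MeasurableSpace E] (μ : Measure E)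

/-- The mean of `φ` over the ball of centre `p` and radius `s`, parametrised by the unit ball, so
that `ballMean μ φ p 0 = φ p`. -/
def ballMean (φ : E → ℝ) (p : E) (s : ℝ) : ℝ :=
  ⨍ z in ball 0 1, φ (p + s • z) ∂μ

variable [FiniteDimensional ℝ E] [μ.IsAddHaarMeasure]

lemma ballMean_zero (φ : E → ℝ) (p : E) : ballMean μ φ p 0 = φ p := by
  simp only [ballMean, zero_smul, add_zero]
  exact setAverage_const (measure_ball_pos μ 0 one_pos).ne' measure_ball_lt_top.ne _

variable {μ} [BorelSpace E]

lemma integrableOn_comp_add_smul {φ : E → ℝ} (hφ : Continuous φ) (p : E) (s : ℝ) :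
    IntegrableOn (fun z : E => φ (p + s • z)) (ball 0 1) μ :=
  ((show Continuous fun z : E => φ (p + s • z) by fun_prop).continuousOn.integrableOn_compact
    (isCompact_closedBall 0 1)).mono_set ball_subset_closedBall

lemma ballMean_sub {φ : E → ℝ} (hφ : Continuous φ) (p p' : E) (s s' : ℝ) :
    ballMean μ φ p' s' - ballMean μ φ p s
      = ⨍ z in ball 0 1, (φ (p' + s' • z) - φ (p + s • z)) ∂μ := by
  simp only [ballMean, setAverage_eq]
  rw [← smul_sub, integral_sub (integrableOn_comp_add_smul hφ _ _)
    (integrableOn_comp_add_smul hφ _ _)]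

lemma enorm_ballMean_sub_le {φ : E → ℝ} {K : ℝ≥0} (hφ : LipschitzWith K φ) (p q : E) (s r : ℝ)
    (hr : ∀ τ ∈ Ioo (0 : ℝ) 1, s + τ * r ≠ 0) :
    ‖ballMean μ φ (p + q) (s + r) - ballMean μ φ p s‖ₑ ≤
      ∫⁻ τ in Ioo (0 : ℝ) 1, ⨍⁻ z in ball 0 1,
        ‖fderiv ℝ φ (p + τ • q + (s + τ * r) • z)‖ₑ * ‖q + r • z‖ₑ ∂μ := by
  have hline : ∀ (τ : ℝ) (z : E),
      p + τ • q + (s + τ * r) • z = p + s • z + τ • (q + r • z) := fun τ z => by module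
  have hftc : ∀ z : E, ‖φ (p + q + (s + r) • z) - φ (p + s • z)‖ₑ ≤
      ∫⁻ τ in Ioo (0 : ℝ) 1,
        ‖deriv (fun t : ℝ => φ (p + s • z + t • (q + r • z))) τ‖ₑ := fun z => by
    have h1 := hline 1 z
    simp only [one_smul, one_mul] at h1
    have := enorm_sub_le_lintegral_deriv (lipschitzWith_comp_segment hφ (p + s • z) (q + r • z))
    simpa only [one_smul, zero_smul, add_zero, ← h1] using this
  have hmeas : Measurable fun w : E × ℝ =>
      ‖deriv (fun t : ℝ => φ (p + s • w.1 + t • (q + r • w.1))) w.2‖ₑ :=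
    (measurable_deriv_with_param (f := fun z t => φ (p + s • z + t • (q + r • z)))
      (hφ.continuous.comp (by fun_prop))).enorm
  rw [ballMean_sub hφ.continuous]
  calc _ ≤ ⨍⁻ z in ball 0 1, ‖φ (p + q + (s + r) • z) - φ (p + s • z)‖ₑ ∂μ :=
        enorm_integral_le_lintegral_enorm _
    _ ≤ ⨍⁻ z in ball 0 1, (∫⁻ τ in Ioo (0 : ℝ) 1,
          ‖deriv (fun t : ℝ => φ (p + s • z + t • (q + r • z))) τ‖ₑ) ∂μ := lintegral_mono hftc
    _ = ∫⁻ τ in Ioo (0 : ℝ) 1, ⨍⁻ z in ball 0 1,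
          ‖deriv (fun t : ℝ => φ (p + s • z + t • (q + r • z))) τ‖ₑ ∂μ :=
        lintegral_lintegral_swap hmeas.aemeasurable
    _ ≤ _ := by
        refine setLIntegral_mono' measurableSet_Ioo fun τ hτ => ?_
        refine laverage_mono_ae (ae_restrict_of_ae ?_)
        filter_upwards [ae_comp_add_smul μ hφ.ae_differentiableAt (p + τ • q) (hr τ hτ)] with z hz
        rw [hline] at hz ⊢
        exact enorm_deriv_comp_segment_le hz

lemma setLAverage_ball_comp_add_smul_le (g : E → ℝ≥0∞) {p p' : E} {r s R : ℝ} (hr : 0 < r)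
    (hrs : r ≤ s) (hsR : s + dist p' p ≤ R) :
    ⨍⁻ z in ball 0 1, g (p' + s • z) ∂μ ≤ (μ (ball p r))⁻¹ * ∫⁻ x in ball p R, g x ∂μ := by
  have hvol : μ (ball p r) ≤ μ (ball p' s) := by
    rw [Measure.addHaar_ball_center, ← Measure.addHaar_ball_center μ p']
    exact measure_mono (ball_subset_ball hrs)
  rw [setLAverage_ball_comp_add_smul μ g p' (hr.trans_le hrs), setLAverage_eq,
    ENNReal.div_eq_inv_mul]
  gcongr
  exact ball_subset_ball' hsR

lemma enorm_ballMean_sub_le_of_dist_le {φ : E → ℝ} {K : ℝ≥0} (hφ : LipschitzWith K φ) {p p' : E}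
    {s s' : ℝ} (hs : 0 < s) (hclose : dist p p' + |s' - s| ≤ s / 2) :
    ‖ballMean μ φ p' s' - ballMean μ φ p s‖ₑ ≤
      ENNReal.ofReal (dist p p' + |s' - s|) * ((μ (ball p (s / 2)))⁻¹ *
        ∫⁻ x in ball p (2 * s), ‖fderiv ℝ φ x‖ₑ ∂μ) := by
  obtain ⟨q, rfl⟩ : ∃ q, p' = p + q := ⟨p' - p, by abel⟩
  obtain ⟨r, rfl⟩ : ∃ r, s' = s + r := ⟨s' - s, by ring⟩
  simp only [dist_self_add_right, add_sub_cancel_left] at hclose ⊢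
  have hτr : ∀ τ ∈ Ioo (0 : ℝ) 1, |τ * r| ≤ |r| ∧ ‖τ • q‖ ≤ ‖q‖ := fun τ hτ => by
    rw [abs_mul, norm_smul, Real.norm_eq_abs, abs_of_pos hτ.1]
    exact ⟨mul_le_of_le_one_left (abs_nonneg r) hτ.2.le,
      mul_le_of_le_one_left (norm_nonneg q) hτ.2.le⟩
  have hradius : ∀ τ ∈ Ioo (0 : ℝ) 1, s / 2 ≤ s + τ * r := fun τ hτ => by
    linarith [neg_abs_le (τ * r), (hτr τ hτ).1, norm_nonneg q]
  refine (enorm_ballMean_sub_le hφ p q s r fun τ hτ => by linarith [hradius τ hτ]).trans ?_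
  calc _ ≤ ∫⁻ τ in Ioo (0 : ℝ) 1, ENNReal.ofReal (‖q‖ + |r|) *
          ⨍⁻ z in ball 0 1, ‖fderiv ℝ φ (p + τ • q + (s + τ * r) • z)‖ₑ ∂μ := by
        refine lintegral_mono fun _ => ?_
        refine le_of_le_of_eq ?_ (lintegral_const_mul' _ _ ENNReal.ofReal_ne_top)
        refine laverage_mono_ae (ae_restrict_of_forall_mem measurableSet_ball fun z hz => ?_)
        exact (mul_comm _ _).trans_le (mul_le_mul_left (enorm_add_smul_le_of_mem_ball q r hz) _)
    _ ≤ ∫⁻ _ in Ioo (0 : ℝ) 1, ENNReal.ofReal (‖q‖ + |r|) * ((μ (ball p (s / 2)))⁻¹ *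
          ∫⁻ x in ball p (2 * s), ‖fderiv ℝ φ x‖ₑ ∂μ) := by
        refine setLIntegral_mono' measurableSet_Ioo fun τ hτ => mul_le_mul_right ?_ _
        refine setLAverage_ball_comp_add_smul_le _ (half_pos hs) (hradius τ hτ) ?_
        rw [dist_self_add_left]
        linarith [le_abs_self (τ * r), (hτr τ hτ).1, (hτr τ hτ).2]
    _ = _ := by simp

end BallMean

section MeansAlongCurve

open Module

lemma measurable_measure_ball {X : Type*} [PseudoMetricSpace X] [SecondCountableTopology X]
    [MeasurableSpace X] [OpensMeasurableSpace X] {μ : Measure X} [SFinite μ] {f : X → ℝ}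
    (hf : Measurable f) :
    Measurable fun x => μ (ball x (f x)) :=
  measurable_measure_prodMk_left
    (measurableSet_lt (measurable_snd.dist measurable_fst) (hf.comp measurable_fst))

variable {E : Type*} [NormedAddCommGroup E] [NormedSpace ℝ E] [FiniteDimensional ℝ E]
  [MeasurableSpace E] [BorelSpace E] {μ : Measure E} [μ.IsAddHaarMeasure]

lemma inv_measure_ball_le {f : E → ℝ} (hf : LipschitzWith 1 f) {p x : E}
    (hx : x ∈ ball p (f p / 8)) :
    (μ (ball p (f p / 32)))⁻¹ ≤ ENNReal.ofReal (36 ^ finrank ℝ E) * (μ (ball x (f x)))⁻¹ := by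
  have hfx : f x ≤ f p + dist x p := by simpa using hf.le_add_mul x p
  rw [mem_ball] at hx
  have hvol : μ (ball x (f x)) ≤ ENNReal.ofReal (36 ^ finrank ℝ E) * μ (ball p (f p / 32)) := by
    rw [Measure.addHaar_ball_center μ p, ← Measure.addHaar_ball_mul_of_pos μ x (by norm_num)]
    exact measure_mono (ball_subset_ball (by linarith))
  have h36 : ENNReal.ofReal (36 ^ finrank ℝ E) ≠ 0 := by simp
  rw [← ENNReal.inv_mul_le_iff h36 ENNReal.ofReal_ne_top,
    ← ENNReal.mul_inv (.inl h36) (.inl ENNReal.ofReal_ne_top)]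
  exact ENNReal.inv_le_inv' hvol

lemma enorm_ballMean_step_le {φ : E → ℝ} {K : ℝ≥0} (hφ : LipschitzWith K φ) {f : E → ℝ}
    (hf : LipschitzWith 1 f) {p p' : E} (hp : 0 < f p) (hclose : dist p p' ≤ f p / 64) :
    ‖ballMean μ φ p' (f p' / 16) - ballMean μ φ p (f p / 16)‖ₑ ≤
      2 * ENNReal.ofReal (36 ^ finrank ℝ E) * ∫⁻ x in ball p (f p / 8),
        ‖fderiv ℝ φ x‖ₑ * (μ (ball x (f x)))⁻¹ * edist p p' ∂μ := by
  have hradii : |f p' / 16 - f p / 16| ≤ dist p p' := by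
    have hdist := hf.dist_le_mul p' p
    rw [NNReal.coe_one, one_mul, Real.dist_eq, dist_comm] at hdist
    rw [← sub_div, abs_div, abs_of_pos (by norm_num : (0 : ℝ) < 16)]
    linarith [abs_nonneg (f p' - f p)]
  calc _ ≤ ENNReal.ofReal (dist p p' + |f p' / 16 - f p / 16|) * ((μ (ball p (f p / 16 / 2)))⁻¹ *
          ∫⁻ x in ball p (2 * (f p / 16)), ‖fderiv ℝ φ x‖ₑ ∂μ) :=
        enorm_ballMean_sub_le_of_dist_le hφ (by positivity) (by linarith)
    _ ≤ 2 * edist p p' * ((μ (ball p (f p / 32)))⁻¹ *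
          ∫⁻ x in ball p (f p / 8), ‖fderiv ℝ φ x‖ₑ ∂μ) := by
        rw [show f p / 16 / 2 = f p / 32 by ring, show 2 * (f p / 16) = f p / 8 by ring, edist_dist,
          ← ENNReal.ofReal_ofNat, ← ENNReal.ofReal_mul zero_le_two]
        gcongr
        linarith
    _ = 2 * edist p p' * ∫⁻ x in ball p (f p / 8),
          (μ (ball p (f p / 32)))⁻¹ * ‖fderiv ℝ φ x‖ₑ ∂μ := by
        rw [lintegral_const_mul' _ _
          (ENNReal.inv_ne_top.2 (measure_ball_pos μ p (by positivity)).ne')]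
    _ ≤ 2 * edist p p' * ∫⁻ x in ball p (f p / 8),
          ENNReal.ofReal (36 ^ finrank ℝ E) * (μ (ball x (f x)))⁻¹ * ‖fderiv ℝ φ x‖ₑ ∂μ := by
        gcongr 2 * edist p p' * ?_
        exact setLIntegral_mono' measurableSet_ball fun x hx =>
          mul_le_mul_left (inv_measure_ball_le hf hx) _
    _ = _ := by
        rw [mul_assoc, mul_assoc, ← lintegral_const_mul' _ _ ENNReal.ofReal_ne_top,
          ← lintegral_const_mul' _ _ (edist_ne_top p p')]
        congr 1
        exact lintegral_congr fun x => by ring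

lemma enorm_ballMean_sub_le_lintegral_eVariationOn {φ : E → ℝ} {K : ℝ≥0}
    (hφ : LipschitzWith K φ) {f : E → ℝ} (hf : LipschitzWith 1 f) {γ : ℝ → E}
    (hγ : ContinuousOn γ (Icc 0 1)) (hpos : ∀ t ∈ Icc (0 : ℝ) 1, 0 < f (γ t)) :
    ‖ballMean μ φ (γ 1) (f (γ 1) / 16) - ballMean μ φ (γ 0) (f (γ 0) / 16)‖ₑ ≤
      2 * ENNReal.ofReal (36 ^ finrank ℝ E) * ∫⁻ x, ‖fderiv ℝ φ x‖ₑ * (μ (ball x (f x)))⁻¹ *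
        eVariationOn γ {t ∈ Icc 0 1 | γ t ∈ ball x (f x / 4)} ∂μ := by
  obtain ⟨N, t, ht, ht0, htN, htmem, hfine, -⟩ := exists_partition_dist_lt hf.continuous hγ hpos
  set p : ℕ → E := fun i => γ (t i) with hp
  set mean : ℕ → ℝ := fun i => ballMean μ φ (p i) (f (p i) / 16) with hmean
  set g : E → ℝ≥0∞ := fun x => ‖fderiv ℝ φ x‖ₑ * (μ (ball x (f x)))⁻¹
  have hgm : Measurable g := (measurable_fderiv ℝ φ).enorm.mul
    (measurable_measure_ball hf.continuous.measurable).inv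
  calc _ = edist (mean 0) (mean N) := by
        rw [edist_comm, edist_eq_enorm_sub]; simp only [hmean, hp, ht0, htN]
    _ ≤ ∑ i ∈ Finset.range N, edist (mean i) (mean (i + 1)) := edist_le_range_sum_edist mean N
    _ ≤ ∑ i ∈ Finset.range N, 2 * ENNReal.ofReal (36 ^ finrank ℝ E) *
          ∫⁻ x in ball (p i) (f (p i) / 8), g x * edist (p i) (p (i + 1)) ∂μ := by
        gcongr with i
        rw [edist_comm, edist_eq_enorm_sub]
        exact enorm_ballMean_step_le hφ hf (hpos _ (htmem i)) (hfine i).le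
    _ = 2 * ENNReal.ofReal (36 ^ finrank ℝ E) * ∫⁻ x, g x * ∑ i ∈ Finset.range N,
          (ball (p i) (f (p i) / 8)).indicator (fun _ => edist (p i) (p (i + 1))) x ∂μ := by
        simp only [Finset.mul_sum, ← indicator_mul_right]
        rw [← Finset.mul_sum, lintegral_finsetSum]
        · simp only [lintegral_indicator measurableSet_ball]
        · exact fun i _ => (hgm.mul_const _).indicator measurableSet_ball
    _ ≤ _ := by
        gcongr with x
        exact sum_indicator_ball_edist_le hf ht htmem hfine N x

end MeansAlongCurve

section RieszKernel

open Module

lemma enn_rpow_le_rpow_of_nonpos {a b : ℝ≥0∞} {z : ℝ} (hab : a ≤ b) (hz : z ≤ 0) :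
    b ^ z ≤ a ^ z := by
  rw [← neg_neg z, ENNReal.rpow_neg b, ENNReal.rpow_neg a]
  exact ENNReal.inv_le_inv' (ENNReal.rpow_le_rpow hab (neg_nonneg.2 hz))

lemma lintegral_Ioi_rpow_of_lt {a c : ℝ} (ha : a < -1) (hc : 0 < c) :
    ∫⁻ τ in Ioi c, ENNReal.ofReal (τ ^ a) = ENNReal.ofReal (-c ^ (a + 1) / (a + 1)) := by
  rw [← integral_Ioi_rpow_of_lt ha hc, ofReal_integral_eq_lintegral_ofReal
    (integrableOn_Ioi_rpow_of_lt ha hc)]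
  exact ae_restrict_of_forall_mem measurableSet_Ioi fun τ hτ => Real.rpow_nonneg (hc.trans hτ).le a

variable {E : Type*} [NormedAddCommGroup E] [NormedSpace ℝ E]

/-- The radial weight obtained from `x` in the ball of centre `y` and radius `s` when the balls
of radius `τ * s` are pulled back to the unit ball, as a function of the scale `τ`. -/
def radialWeight (y : E) (s : ℝ) (x : E) (τ : ℝ) : ℝ≥0∞ :=
  edist x y * (Ioi (dist x y / s)).indicator
    (fun τ => ENNReal.ofReal ((s ^ finrank ℝ E)⁻¹ * τ ^ (-(finrank ℝ E : ℝ) - 1))) τ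

variable [FiniteDimensional ℝ E]

lemma one_sub_finrank_nonpos [Nontrivial E] : (1 : ℝ) - finrank ℝ E ≤ 0 := by
  have : 1 ≤ (finrank ℝ E : ℝ) := Nat.one_le_cast.2 finrank_pos
  linarith

lemma lintegral_radialWeight_le [Nontrivial E] (y : E) {s : ℝ} (hs : 0 < s) (x : E) :
    ∫⁻ τ in Ioo (0 : ℝ) 1, radialWeight y s x τ ≤
      (finrank ℝ E : ℝ≥0∞)⁻¹ * edist x y ^ ((1 : ℝ) - finrank ℝ E) := by
  set d := finrank ℝ E with hd
  have hdpos : (0 : ℝ) < d := Nat.cast_pos.2 finrank_pos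
  rcases eq_or_ne x y with rfl | hxy
  · simp [radialWeight]
  have hdist : 0 < dist x y := dist_pos.2 hxy
  have hreal : dist x y * ((s ^ d)⁻¹ * (-(dist x y / s) ^ (-(d : ℝ) - 1 + 1) / (-(d : ℝ) - 1 + 1)))
      = (d : ℝ)⁻¹ * dist x y ^ ((1 : ℝ) - d) := by
    rw [sub_add_cancel, neg_div_neg_eq, Real.rpow_neg (by positivity), Real.rpow_natCast, div_pow,
      Real.rpow_sub hdist, Real.rpow_one, Real.rpow_natCast]
    field_simp
  calc ∫⁻ τ in Ioo (0 : ℝ) 1, radialWeight y s x τ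
      ≤ ∫⁻ τ, radialWeight y s x τ := setLIntegral_le_lintegral _ _
    _ = edist x y * (ENNReal.ofReal (s ^ d)⁻¹ *
          ∫⁻ τ in Ioi (dist x y / s), ENNReal.ofReal (τ ^ (-(d : ℝ) - 1))) := by
        simp only [radialWeight]
        rw [lintegral_const_mul' _ _ (edist_ne_top x y), lintegral_indicator measurableSet_Ioi,
          ← lintegral_const_mul' _ _ ENNReal.ofReal_ne_top]
        simp only [ENNReal.ofReal_mul (inv_nonneg.2 (pow_nonneg hs.le d)), ← hd]
    _ = ENNReal.ofReal ((d : ℝ)⁻¹ * dist x y ^ ((1 : ℝ) - d)) := by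
        rw [lintegral_Ioi_rpow_of_lt (by linarith) (by positivity), edist_dist,
          ← ENNReal.ofReal_mul (by positivity), ← ENNReal.ofReal_mul hdist.le, hreal]
    _ = _ := by
        rw [ENNReal.ofReal_mul (by positivity), ENNReal.ofReal_inv_of_pos hdpos,
          ENNReal.ofReal_natCast, ← ENNReal.ofReal_rpow_of_pos hdist, edist_dist]

variable [MeasurableSpace E] [BorelSpace E] {μ : Measure E} [μ.IsAddHaarMeasure]

lemma setLAverage_radial_eq (g : E → ℝ≥0∞) (y : E) {s τ : ℝ} (hs : 0 < s)
    (hτ : τ ∈ Ioo (0 : ℝ) 1) :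
    ⨍⁻ z in ball 0 1, g (y + (τ * s) • z) * ‖s • z‖ₑ ∂μ =
      (μ (ball 0 1))⁻¹ * ∫⁻ x in ball y s, g x * radialWeight y s x τ ∂μ := by
  have hτs : 0 < τ * s := mul_pos hτ.1 hs
  have hscale : ∀ z : E, ‖s • z‖ₑ = ENNReal.ofReal τ⁻¹ * edist (y + (τ * s) • z) y := fun z => by
    rw [edist_eq_enorm_sub, add_sub_cancel_left, mul_smul, enorm_smul τ,
      Real.enorm_of_nonneg hτ.1.le, ← mul_assoc, ← ENNReal.ofReal_mul (inv_nonneg.2 hτ.1.le),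
      inv_mul_cancel₀ hτ.1.ne', ENNReal.ofReal_one, one_mul]
  set c := ENNReal.ofReal ((s ^ finrank ℝ E)⁻¹ * τ ^ (-(finrank ℝ E : ℝ) - 1)) with hc
  have hcoeff : (ENNReal.ofReal ((τ * s) ^ finrank ℝ E))⁻¹ * ENNReal.ofReal τ⁻¹ = c := by
    rw [← ENNReal.ofReal_inv_of_pos (by positivity), ← ENNReal.ofReal_mul (by positivity), hc,
      Real.rpow_sub_one hτ.1.ne', Real.rpow_neg hτ.1.le, Real.rpow_natCast, mul_pow, mul_inv]
    ring_nf
  have hweight : ∀ x, g x * radialWeight y s x τ =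
      (ball y (τ * s)).indicator (fun x => c * (g x * edist x y)) x := fun x => by
    have hmem : τ ∈ Ioi (dist x y / s) ↔ x ∈ ball y (τ * s) := div_lt_iff₀ hs
    by_cases hx : x ∈ ball y (τ * s)
    · rw [radialWeight, indicator_of_mem (hmem.2 hx), indicator_of_mem hx]
      ring
    · rw [radialWeight, indicator_of_notMem (mt hmem.1 hx), indicator_of_notMem hx, mul_zero,
        mul_zero]
  have hball : ball y (τ * s) ⊆ ball y s := ball_subset_ball (mul_le_of_le_one_left hs.le hτ.2.le)
  have hτtop := ENNReal.ofReal_ne_top (r := τ⁻¹)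
  simp only [hscale, hweight]
  rw [setLAverage_ball_comp_add_smul μ (fun x => g x * (_ * edist x y)) y hτs, setLAverage_eq,
    setLIntegral_indicator measurableSet_ball, inter_eq_left.2 hball,
    lintegral_const_mul' _ _ ENNReal.ofReal_ne_top, ← hc, ← hcoeff,
    Measure.addHaar_ball_of_pos μ y hτs, ENNReal.div_eq_inv_mul,
    ENNReal.mul_inv (.inr measure_ball_lt_top.ne) (.inl ENNReal.ofReal_ne_top)]
  simp only [mul_left_comm _ (ENNReal.ofReal τ⁻¹)]
  rw [lintegral_const_mul' _ _ hτtop]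
  ring

lemma measurable_radialWeight (y : E) (s : ℝ) :
    Measurable fun w : ℝ × E => radialWeight y s w.2 w.1 := by
  have hindicator : ∀ w : ℝ × E, radialWeight y s w.2 w.1 =
      edist w.2 y * {w : ℝ × E | dist w.2 y / s < w.1}.indicator (fun w =>
        ENNReal.ofReal ((s ^ finrank ℝ E)⁻¹ * w.1 ^ (-(finrank ℝ E : ℝ) - 1))) w := fun w => rfl
  simp only [hindicator]
  refine (measurable_snd.edist measurable_const).mul (Measurable.indicator (by fun_prop) ?_)
  exact measurableSet_lt (by fun_prop) measurable_fst

lemma enorm_ballMean_sub_apply_le [Nontrivial E] {φ : E → ℝ} {K : ℝ≥0} (hφ : LipschitzWith K φ)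
    (y : E) {s : ℝ} (hs : 0 < s) :
    ‖ballMean μ φ y s - φ y‖ₑ ≤ (μ (ball 0 1))⁻¹ * ((finrank ℝ E : ℝ≥0∞)⁻¹ *
      ∫⁻ x in ball y s, ‖fderiv ℝ φ x‖ₑ * edist x y ^ ((1 : ℝ) - finrank ℝ E) ∂μ) := by
  have hmeas : Measurable fun w : ℝ × E => ‖fderiv ℝ φ w.2‖ₑ * radialWeight y s w.2 w.1 :=
    ((measurable_fderiv ℝ φ).enorm.comp measurable_snd).mul (measurable_radialWeight y s)
  have hdim : (finrank ℝ E : ℝ≥0∞)⁻¹ ≠ ∞ :=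
    ENNReal.inv_ne_top.2 (Nat.cast_ne_zero.2 finrank_pos.ne')
  have hball : (μ (ball (0 : E) 1))⁻¹ ≠ ∞ := ENNReal.inv_ne_top.2 (measure_ball_pos μ 0 one_pos).ne'
  have hradial := enorm_ballMean_sub_le (μ := μ) hφ y 0 0 s fun τ hτ => by
    simpa using ⟨hτ.1.ne', hs.ne'⟩
  simp only [add_zero, zero_add, smul_zero, ballMean_zero] at hradial
  calc ‖ballMean μ φ y s - φ y‖ₑ
      ≤ ∫⁻ τ in Ioo (0 : ℝ) 1, (μ (ball 0 1))⁻¹ *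
          ∫⁻ x in ball y s, ‖fderiv ℝ φ x‖ₑ * radialWeight y s x τ ∂μ :=
        hradial.trans_eq <| setLIntegral_congr_fun measurableSet_Ioo fun τ hτ =>
          setLAverage_radial_eq (fun x => ‖fderiv ℝ φ x‖ₑ) y hs hτ
    _ = (μ (ball 0 1))⁻¹ * ∫⁻ x in ball y s, ‖fderiv ℝ φ x‖ₑ *
          (∫⁻ τ in Ioo (0 : ℝ) 1, radialWeight y s x τ) ∂μ := by
        rw [lintegral_const_mul' _ _ hball, lintegral_lintegral_swap hmeas.aemeasurable]
        simp only [lintegral_const_mul' _ _ enorm_ne_top]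
    _ ≤ (μ (ball 0 1))⁻¹ * ∫⁻ x in ball y s, ‖fderiv ℝ φ x‖ₑ *
          ((finrank ℝ E : ℝ≥0∞)⁻¹ * edist x y ^ ((1 : ℝ) - finrank ℝ E)) ∂μ := by
        gcongr with x
        exact lintegral_radialWeight_le y hs x
    _ = _ := by
        rw [← lintegral_const_mul' _ _ hdim]
        simp only [mul_left_comm]

lemma setLIntegral_ball_enorm_rpow_lt_top [Nontrivial E] (R : ℝ) :
    ∫⁻ x in ball (0 : E) R, ‖x‖ₑ ^ ((1 : ℝ) - finrank ℝ E) ∂μ < ∞ := by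
  have hint : IntegrableOn (fun x : E => ‖x‖ ^ ((1 : ℝ) - finrank ℝ E)) (ball 0 R) μ := by
    refine integrableOn_ball_of_norm_le_rpow (C := 1) (α := finrank ℝ E - 1) finrank_pos
      (by linarith) (.of_forall fun x => ?_)
      (measurable_norm.pow_const _).aestronglyMeasurable
    rw [Real.norm_of_nonneg (by positivity), one_mul, neg_sub]
  refine lt_of_eq_of_lt (lintegral_congr_ae (ae_restrict_of_ae ?_)) hint.2
  filter_upwards [Measure.ae_ne μ 0] with x hx
  rw [Real.enorm_of_nonneg (by positivity), ← ENNReal.ofReal_rpow_of_pos (norm_pos_iff.2 hx),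
    ofReal_norm]

lemma setLIntegral_edist_rpow_le [Nontrivial E] {Ω : Set E} (y : E) :
    ∫⁻ x in Ω, edist x y ^ ((1 : ℝ) - finrank ℝ E) ∂μ ≤
      μ Ω + ∫⁻ x in ball (0 : E) 1, ‖x‖ₑ ^ ((1 : ℝ) - finrank ℝ E) ∂μ := by
  set h : E → ℝ≥0∞ := (ball 0 1).indicator fun x => ‖x‖ₑ ^ ((1 : ℝ) - finrank ℝ E) with hh
  have hpoint : ∀ x, edist x y ^ ((1 : ℝ) - finrank ℝ E) ≤ 1 + h (x - y) := fun x => by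
    rw [edist_eq_enorm_sub]
    by_cases hx : x - y ∈ ball (0 : E) 1
    · rw [hh, indicator_of_mem hx]
      exact le_add_self
    · rw [hh, indicator_of_notMem hx, add_zero]
      have hnorm : 1 ≤ ‖x - y‖ₑ := by
        rw [← ofReal_norm, ENNReal.one_le_ofReal]
        simpa using hx
      simpa using enn_rpow_le_rpow_of_nonpos hnorm (one_sub_finrank_nonpos (E := E))
  calc ∫⁻ x in Ω, edist x y ^ ((1 : ℝ) - finrank ℝ E) ∂μ
      ≤ ∫⁻ x in Ω, (1 + h (x - y)) ∂μ := lintegral_mono hpoint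
    _ = μ Ω + ∫⁻ x in Ω, h (x - y) ∂μ := by
        rw [lintegral_add_left measurable_const, setLIntegral_one]
    _ ≤ μ Ω + ∫⁻ x, h (x - y) ∂μ := by gcongr; exact Measure.restrict_le_self
    _ = _ := by rw [lintegral_sub_right_eq_self h, lintegral_indicator measurableSet_ball]

end RieszKernel

section NearCurve

open Module

variable {X : Type*} [PseudoMetricSpace X]

lemma ofReal_min_sub_le_sum_edist (p : ℕ → X) (x : X) {a : ℝ} (b : ℝ) {i N : ℕ}
    (hiN : i ≤ N) (hi : dist (p i) x ≤ a) :
    ENNReal.ofReal (min b (dist (p N) x) - a) ≤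
      ∑ k ∈ Finset.range N with dist (p k) x < b, edist (p k) (p (k + 1)) := by
  induction N, hiN using Nat.le_induction with
  | base =>
    rw [ENNReal.ofReal_of_nonpos (by linarith [min_le_right b (dist (p i) x)])]
    exact zero_le
  | succ N _ ih =>
    rw [Finset.sum_filter] at ih ⊢
    rw [Finset.sum_range_succ]
    split_ifs with hb
    · refine le_trans ?_ (add_le_add_left ih _)
      rw [edist_dist]
      refine le_trans (ENNReal.ofReal_le_ofReal ?_) ENNReal.ofReal_add_le
      rw [min_eq_right hb.le]
      linarith [min_le_right b (dist (p (N + 1)) x), dist_triangle_left (p (N + 1)) x (p N)]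
    · rw [add_zero]
      refine le_trans (ENNReal.ofReal_le_ofReal ?_) ih
      rw [min_eq_left (not_lt.1 hb)]
      linarith [min_le_left b (dist (p (N + 1)) x)]

lemma ofReal_rpow_le_of_dist_lt {f : X → ℝ} (hf : LipschitzWith 1 f) {p x : X} {z : ℝ} (hz : z ≤ 0)
    (hx : dist p x < 3 / 4 * f x) :
    ENNReal.ofReal (f x) ^ z ≤ ENNReal.ofReal (f p / 2) ^ z := by
  have hfp : f p ≤ f x + dist p x := by simpa using hf.le_add_mul p x
  exact enn_rpow_le_rpow_of_nonpos
    (ENNReal.ofReal_le_ofReal (by linarith [dist_nonneg (x := p) (y := x)])) hz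

lemma mem_ball_of_dist_lt {f : X → ℝ} (hf : LipschitzWith 1 f) {p x : X}
    (hx : dist p x < 3 / 4 * f x) : x ∈ ball p (3 * f p) := by
  have hfx : f x ≤ f p + dist x p := by simpa using hf.le_add_mul x p
  rw [mem_ball, dist_comm]
  rw [dist_comm] at hfx
  linarith

-- Either the last point is within `3 / 4 * f x` of `x`, and then `f (p N)` is comparable to `f x`,
-- or the steps starting within `3 / 4 * f x` of `x` have total length at least `f x / 8`.
lemma ofReal_rpow_le_sum_indicator {f : X → ℝ} (hf : LipschitzWith 1 f) {p : ℕ → X} {i N : ℕ}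
    (hiN : i ≤ N) {d : ℕ} (hd : (1 : ℝ) - d ≤ 0) {x : X} (hfx : 0 < f x)
    (hi : dist (p i) x ≤ 5 / 8 * f x) :
    ENNReal.ofReal (f x) ^ ((1 : ℝ) - d) ≤ ENNReal.ofReal (f (p N) / 2) ^ ((1 : ℝ) - d) +
      ∑ k ∈ Finset.range N, (ball (p k) (3 * f (p k))).indicator (fun _ =>
        8 * ENNReal.ofReal (f (p k) / 2) ^ (-(d : ℝ)) * edist (p k) (p (k + 1))) x := by
  classical
  rcases lt_or_ge (dist (p N) x) (3 / 4 * f x) with hnear | hfar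
  · exact (ofReal_rpow_le_of_dist_lt hf hd hnear).trans le_self_add
  refine le_add_left ?_
  have hlength := ofReal_min_sub_le_sum_edist p x (3 / 4 * f x) hiN hi
  rw [min_eq_left hfar, show 3 / 4 * f x - 5 / 8 * f x = 8⁻¹ * f x by ring] at hlength
  have hsplit : ENNReal.ofReal (f x) ^ ((1 : ℝ) - d) =
      8 * ENNReal.ofReal (f x) ^ (-(d : ℝ)) * ENNReal.ofReal (8⁻¹ * f x) := by
    have hpos : ENNReal.ofReal (f x) ≠ 0 := (ENNReal.ofReal_pos.2 hfx).ne'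
    rw [sub_eq_neg_add, ENNReal.rpow_add _ _ hpos ENNReal.ofReal_ne_top, ENNReal.rpow_one,
      ENNReal.ofReal_mul (by norm_num), ENNReal.ofReal_inv_of_pos (by norm_num),
      ENNReal.ofReal_ofNat, mul_mul_mul_comm, ENNReal.mul_inv_cancel (by norm_num) (by norm_num),
      one_mul]
  calc _ = 8 * ENNReal.ofReal (f x) ^ (-(d : ℝ)) * ENNReal.ofReal (8⁻¹ * f x) := hsplit
    _ ≤ ∑ k ∈ Finset.range N with dist (p k) x < 3 / 4 * f x,
          8 * ENNReal.ofReal (f x) ^ (-(d : ℝ)) * edist (p k) (p (k + 1)) := by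
        rw [← Finset.mul_sum]
        gcongr
    _ ≤ _ := by
        rw [Finset.sum_filter]
        refine Finset.sum_le_sum fun k _ => ?_
        split_ifs with hk
        · rw [indicator_of_mem (mem_ball_of_dist_lt hf hk)]
          gcongr 8 * ?_ * _
          exact ofReal_rpow_le_of_dist_lt hf (neg_nonpos.2 d.cast_nonneg) hk
        · exact zero_le

variable {E : Type*} [NormedAddCommGroup E] [NormedSpace ℝ E] [FiniteDimensional ℝ E]
  [MeasurableSpace E] [BorelSpace E] {μ : Measure E} [μ.IsAddHaarMeasure]

lemma lintegral_indicator_ball_eq (p : E) {r : ℝ} (hr : 0 < r) (c : ℝ≥0∞) :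
    ∫⁻ x, (ball p (3 * r)).indicator (fun _ =>
        8 * ENNReal.ofReal (r / 2) ^ (-(finrank ℝ E : ℝ)) * c) x ∂μ =
      8 * ENNReal.ofReal (6 ^ finrank ℝ E) * μ (ball 0 1) * c := by
  have hcoeff : ENNReal.ofReal (r / 2) ^ (-(finrank ℝ E : ℝ)) *
      ENNReal.ofReal ((3 * r) ^ finrank ℝ E) = ENNReal.ofReal (6 ^ finrank ℝ E) := by
    rw [ENNReal.ofReal_rpow_of_pos (by positivity), ← ENNReal.ofReal_mul (by positivity),
      Real.rpow_neg (by positivity), Real.rpow_natCast, ← div_eq_inv_mul, ← div_pow]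
    congr 2
    field_simp
    norm_num
  rw [lintegral_indicator measurableSet_ball, setLIntegral_const,
    Measure.addHaar_ball_of_pos μ p (by positivity), ← hcoeff]
  ring

lemma setLIntegral_near_curve_le [Nontrivial E] {f : E → ℝ} (hf : LipschitzWith 1 f) {γ : ℝ → E}
    (hγ : ContinuousOn γ (Icc 0 1)) (hpos : ∀ t ∈ Icc (0 : ℝ) 1, 0 < f (γ t)) (Ω : Set E) :
    ∫⁻ x in Ω, {x | ∃ t ∈ Icc (0 : ℝ) 1, dist (γ t) x < f x / 2}.indicator
        (fun x => ENNReal.ofReal (f x) ^ ((1 : ℝ) - finrank ℝ E)) x ∂μ ≤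
      ENNReal.ofReal (f (γ 1) / 2) ^ ((1 : ℝ) - finrank ℝ E) * μ Ω +
        8 * ENNReal.ofReal (6 ^ finrank ℝ E) * μ (ball 0 1) * eVariationOn γ (Icc 0 1) := by
  obtain ⟨N, t, ht, -, htN, htmem, -, hdense⟩ := exists_partition_dist_lt hf.continuous hγ hpos
  set d := finrank ℝ E
  set p : ℕ → E := fun k => γ (t k) with hp
  set c : ℝ≥0∞ := ENNReal.ofReal (f (p N) / 2) ^ ((1 : ℝ) - d) with hc
  set h : ℕ → E → ℝ≥0∞ := fun k => (ball (p k) (3 * f (p k))).indicator (fun _ =>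
        8 * ENNReal.ofReal (f (p k) / 2) ^ (-(d : ℝ)) * edist (p k) (p (k + 1)))
  have hpoint : ∀ x, {x | ∃ t ∈ Icc (0 : ℝ) 1, dist (γ t) x < f x / 2}.indicator
      (fun x => ENNReal.ofReal (f x) ^ ((1 : ℝ) - d)) x ≤ c + ∑ k ∈ Finset.range N, h k x := by
    refine indicator_le fun x ⟨s, hs, hsx⟩ => ?_
    obtain ⟨i, hiN, hi⟩ := hdense s hs
    have hfs : f (γ s) ≤ f x + dist (γ s) x := by simpa using hf.le_add_mul (γ s) x
    refine ofReal_rpow_le_sum_indicator hf hiN one_sub_finrank_nonpos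
      (by linarith [dist_nonneg (x := γ s) (y := x)]) ?_
    linarith [dist_triangle (γ (t i)) (γ s) x, dist_nonneg (x := γ s) (y := x)]
  calc _ ≤ ∫⁻ x in Ω, (c + ∑ k ∈ Finset.range N, h k x) ∂μ := lintegral_mono hpoint
    _ = c * μ Ω + ∑ k ∈ Finset.range N, ∫⁻ x in Ω, h k x ∂μ := by
        rw [lintegral_add_left measurable_const, setLIntegral_const, lintegral_finsetSum]
        exact fun k _ => measurable_const.indicator measurableSet_ball
    _ ≤ c * μ Ω + ∑ k ∈ Finset.range N, 8 * ENNReal.ofReal (6 ^ d) * μ (ball 0 1) *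
          edist (p k) (p (k + 1)) := by
        gcongr with k
        exact (setLIntegral_le_lintegral _ _).trans_eq
          (lintegral_indicator_ball_eq _ (hpos _ (htmem k)) _)
    _ ≤ _ := by
        rw [← Finset.mul_sum, hc]
        simp only [hp, htN]
        gcongr
        exact (Finset.sum_congr rfl fun k _ => edist_comm _ _).trans_le
          (eVariationOn.sum_le ht htmem)

end NearCurve

lemma exists_rat_mem_Icc_lt {g : ℝ → ℝ} (hg : ContinuousOn g (Icc 0 1)) {t r : ℝ}
    (ht : t ∈ Icc (0 : ℝ) 1) (hr : g t < r) : ∃ q : ℚ, (q : ℝ) ∈ Icc (0 : ℝ) 1 ∧ g q < r := by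
  set S : Set ℝ := Ioo 0 1 ∩ range ((↑) : ℚ → ℝ)
  have hSIcc : S ⊆ Icc 0 1 := inter_subset_left.trans Ioo_subset_Icc_self
  have htS : t ∈ closure S := by
    rw [← closure_Ioo zero_ne_one] at ht
    exact closure_minimal (Rat.denseRange_cast.open_subset_closure_inter isOpen_Ioo)
      isClosed_closure ht
  have hgt : g t ∈ closure (g '' S) := ((hg t ht).mono hSIcc).mem_closure_image htS
  obtain ⟨_, hlt, _, hqS, rfl⟩ := mem_closure_iff.1 hgt (Iio r) isOpen_Iio hr
  obtain ⟨-, q, rfl⟩ := id hqS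
  exact ⟨q, hSIcc hqS, hlt⟩

namespace PathSystem

variable {n : ℕ} {Ω U : Set (En n)} {x0 : En n} (P : PathSystem Ω U x0)

/-- The set of pairs `(x, y)` such that `γ_y` meets the open ball of centre `x` and radius
`d̂(x) / 2`. Only rational times are used, which makes measurability immediate. -/
def shadow : Set (En n × En n) :=
  {q | ∃ r : ℚ, (r : ℝ) ∈ Icc (0 : ℝ) 1 ∧ dist (P.γ q.2 r) q.1 < infDist q.1 Uᶜ / 2}

lemma mk_mem_shadow_iff {y : En n} (hy : y ∈ U) (x : En n) :
    (x, y) ∈ P.shadow ↔ ∃ t ∈ Icc (0 : ℝ) 1, dist (P.γ y t) x < infDist x Uᶜ / 2 := by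
  refine ⟨fun ⟨r, hr, hlt⟩ => ⟨r, hr, hlt⟩, fun ⟨t, ht, hlt⟩ => ?_⟩
  exact exists_rat_mem_Icc_lt
    ((continuous_id.dist continuous_const).comp_continuousOn (P.contOn y hy)) ht hlt

lemma measurableSet_shadow : MeasurableSet P.shadow := by
  simp only [shadow, ofPred_exists]
  refine .iUnion fun r => .inter (.const _) ?_
  exact measurableSet_lt
    ((P.meas.comp (measurable_const.prodMk measurable_snd)).dist measurable_fst)
    ((measurable_infDist.comp measurable_fst).div_const 2)

/-- The part of the kernel carried by the paths: `d̂(x)^{1-n}` if `γ_y` passes near `x`. -/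
def shadowKernel (x y : En n) : ℝ≥0∞ :=
  P.shadow.indicator (fun q => ENNReal.ofReal (infDist q.1 Uᶜ) ^ ((1 : ℝ) - n)) (x, y)

lemma measurable_shadowKernel : Measurable fun q : En n × En n => P.shadowKernel q.1 q.2 :=
  Measurable.indicator
    (((measurable_infDist.comp measurable_fst).ennreal_ofReal).pow_const _) P.measurableSet_shadow

/-- The kernel whose potential is controlled by `wZero`. -/
def kernel (x y : En n) : ℝ≥0∞ :=
  edist x y ^ ((1 : ℝ) - n) + P.shadowKernel x y

lemma measurable_kernel : Measurable fun q : En n × En n => P.kernel q.1 q.2 :=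
  ((measurable_fst.edist measurable_snd).pow_const _).add P.measurable_shadowKernel

/-- A measurable substitute for `wZero`, which need not be measurable itself. -/
def potential (μ0 : Measure (En n)) (x : En n) : ℝ≥0∞ :=
  ∫⁻ y in Ω, P.kernel x y ∂μ0

lemma measurable_potential (μ0 : Measure (En n)) [SFinite μ0] : Measurable (P.potential μ0) :=
  P.measurable_kernel.lintegral_prod_right'

lemma potential_le_wZero (μ0 : Measure (En n)) (x : En n) :
    P.potential μ0 x ≤ wZero μ0 Ω U P.γ x := by
  have hslice : MeasurableSet {y | (x, y) ∈ P.shadow} :=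
    measurable_prodMk_left P.measurableSet_shadow
  have hriesz : Measurable fun y => edist x y ^ ((1 : ℝ) - n) :=
    (measurable_const.edist measurable_id).pow_const _
  calc P.potential μ0 x = I1 μ0 Ω x + ∫⁻ y in Ω, P.shadowKernel x y ∂μ0 :=
        lintegral_add_left hriesz _
    _ = I1 μ0 Ω x + ENNReal.ofReal (infDist x Uᶜ) ^ ((1 : ℝ) - n) *
          μ0.restrict Ω {y | (x, y) ∈ P.shadow} := by
        rw [← lintegral_indicator_const hslice]
        rfl
    _ ≤ wZero μ0 Ω U P.γ x := by
        rw [wZero, mul_comm, Measure.restrict_apply hslice]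
        gcongr
        exact measure_mono fun y ⟨⟨r, hr, hlt⟩, hy⟩ => ⟨hy, r, hr, hlt.le⟩

lemma setLIntegral_shadowKernel_le [Nontrivial (En n)] (hpos : ∀ x ∈ U, 0 < infDist x Uᶜ)
    {y : En n} (hy : y ∈ U) :
    ∫⁻ x in Ω, P.shadowKernel x y ≤
      ENNReal.ofReal (infDist x0 Uᶜ / 2) ^ ((1 : ℝ) - n) * volume Ω +
        8 * ENNReal.ofReal (6 ^ n) * volume (ball (0 : En n) 1) *
          (ENNReal.ofReal P.C * geoDist U x0 y) := by
  have hnear := setLIntegral_near_curve_le (μ := volume) (lipschitz_infDist_pt Uᶜ) (P.contOn y hy)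
    (fun t ht => hpos _ (P.mapsTo y hy t ht)) Ω
  rw [P.ends y hy, finrank_euclideanSpace_fin] at hnear
  calc ∫⁻ x in Ω, P.shadowKernel x y
      = ∫⁻ x in Ω, {x | ∃ t ∈ Icc (0 : ℝ) 1, dist (P.γ y t) x < infDist x Uᶜ / 2}.indicator
          (fun x => ENNReal.ofReal (infDist x Uᶜ) ^ ((1 : ℝ) - n)) x := by
        classical
        simp only [shadowKernel, indicator_apply, P.mk_mem_shadow_iff hy, mem_ofPred_eq]
    _ ≤ _ := hnear.trans (by gcongr; exact P.total_len y hy)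

lemma lintegral_potential_lt_top [Nontrivial (En n)] (hpos : ∀ x ∈ U, 0 < infDist x Uᶜ)
    (hx0 : x0 ∈ U) (hΩ : MeasurableSet Ω) (hΩU : Ω ⊆ U) (hvol : volume Ω ≠ ∞)
    (μ0 : Measure (En n)) [IsFiniteMeasure μ0] (hgeo : ∫⁻ y in Ω, geoDist U x0 y ∂μ0 < ∞) :
    ∫⁻ x in Ω, P.potential μ0 x < ∞ := by
  set A := volume Ω + (∫⁻ x in ball (0 : En n) 1, ‖x‖ₑ ^ ((1 : ℝ) - n)) +
    ENNReal.ofReal (infDist x0 Uᶜ / 2) ^ ((1 : ℝ) - n) * volume Ω with hA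
  set B := 8 * ENNReal.ofReal (6 ^ n) * volume (ball (0 : En n) 1) * ENNReal.ofReal P.C with hB
  have hAtop : A ≠ ∞ := by
    have hriesz := setLIntegral_ball_enorm_rpow_lt_top (μ := (volume : Measure (En n))) 1
    rw [finrank_euclideanSpace_fin] at hriesz
    have hdist : ENNReal.ofReal (infDist x0 Uᶜ / 2) ≠ 0 :=
      (ENNReal.ofReal_pos.2 (half_pos (hpos x0 hx0))).ne'
    finiteness
  have hBtop : B ≠ ∞ := by finiteness
  have hkernel : ∀ y ∈ Ω, ∫⁻ x in Ω, P.kernel x y ≤ A + B * geoDist U x0 y := fun y hy => by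
    have hriesz := setLIntegral_edist_rpow_le (μ := (volume : Measure (En n))) (Ω := Ω) y
    rw [finrank_euclideanSpace_fin] at hriesz
    have hmeas : Measurable fun x => edist x y ^ ((1 : ℝ) - n) :=
      (measurable_id.edist measurable_const).pow_const _
    simp only [kernel]
    rw [lintegral_add_left hmeas, hA, hB, add_assoc, mul_assoc _ (ENNReal.ofReal P.C)]
    exact add_le_add hriesz (P.setLIntegral_shadowKernel_le hpos (hΩU hy))
  calc ∫⁻ x in Ω, P.potential μ0 x = ∫⁻ y in Ω, (∫⁻ x in Ω, P.kernel x y) ∂μ0 :=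
        lintegral_lintegral_swap P.measurable_kernel.aemeasurable
    _ ≤ ∫⁻ y in Ω, (A + B * geoDist U x0 y) ∂μ0 := setLIntegral_mono' hΩ hkernel
    _ = A * μ0 Ω + B * ∫⁻ y in Ω, geoDist U x0 y ∂μ0 := by
        rw [lintegral_add_left measurable_const, setLIntegral_const, lintegral_const_mul' _ _ hBtop]
    _ < ∞ := by finiteness

lemma inv_measure_ball_mul_eVariationOn_le (hpos : ∀ x ∈ U, 0 < infDist x Uᶜ) (hΩU : Ω ⊆ U)
    {x y : En n} (hx : x ∈ Ω) (hy : y ∈ Ω) :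
    (volume (ball x (infDist x Uᶜ)))⁻¹ *
        eVariationOn (P.γ y) {t ∈ Icc 0 1 | P.γ y t ∈ ball x (infDist x Uᶜ / 4)} ≤
      (volume (ball (0 : En n) 1))⁻¹ * ENNReal.ofReal P.C * P.shadowKernel x y := by
  have hfx := hpos x (hΩU hx)
  by_cases hshadow : (x, y) ∈ P.shadow
  · rw [shadowKernel, indicator_of_mem hshadow]
    have hlen : eVariationOn (P.γ y) {t ∈ Icc 0 1 | P.γ y t ∈ ball x (infDist x Uᶜ / 4)} ≤
        ENNReal.ofReal P.C * ENNReal.ofReal (infDist x Uᶜ) := by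
      rw [← ENNReal.ofReal_mul P.Cpos.le]
      refine (P.ball_len x hx y hy _ (by linarith)).trans (ENNReal.ofReal_le_ofReal ?_)
      gcongr
      · exact P.Cpos.le
      · linarith
    have hf0 : ENNReal.ofReal (infDist x Uᶜ) ≠ 0 := (ENNReal.ofReal_pos.2 hfx).ne'
    rw [Measure.addHaar_ball_of_pos _ _ hfx, finrank_euclideanSpace_fin,
      ENNReal.mul_inv (.inr measure_ball_lt_top.ne) (.inl ENNReal.ofReal_ne_top),
      sub_eq_add_neg, ENNReal.rpow_add _ _ hf0 ENNReal.ofReal_ne_top, ENNReal.rpow_one,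
      ENNReal.rpow_neg, ENNReal.rpow_natCast, ENNReal.ofReal_pow hfx.le]
    refine (mul_le_mul_right hlen _).trans_eq ?_
    ring
  · have hempty : {t ∈ Icc 0 1 | P.γ y t ∈ ball x (infDist x Uᶜ / 4)} = ∅ :=
      eq_empty_of_forall_notMem fun t ⟨ht, hlt⟩ => hshadow <|
        (P.mk_mem_shadow_iff (hΩU hy) x).2 ⟨t, ht, hlt.trans (by linarith)⟩
    rw [hempty, eVariationOn.subsingleton _ subsingleton_empty, mul_zero]
    exact zero_le

lemma enorm_ballMean_sub_le_shadowKernel (hpos : ∀ x ∈ U, 0 < infDist x Uᶜ) (hΩ : MeasurableSet Ω)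
    (hΩU : Ω ⊆ U) (hnull : volume (U \ Ω) = 0) {φ : En n → ℝ} {K : ℝ≥0} (hφ : LipschitzWith K φ)
    {y : En n} (hy : y ∈ Ω) :
    ‖ballMean volume φ x0 (infDist x0 Uᶜ / 16) - ballMean volume φ y (infDist y Uᶜ / 16)‖ₑ ≤
      2 * ENNReal.ofReal (36 ^ n) * ((volume (ball (0 : En n) 1))⁻¹ * ENNReal.ofReal P.C *
        ∫⁻ x in Ω, ‖fderiv ℝ φ x‖ₑ * P.shadowKernel x y) := by
  have hyU := hΩU hy
  have hcurve := enorm_ballMean_sub_le_lintegral_eVariationOn (μ := volume) hφ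
    (lipschitz_infDist_pt Uᶜ) (P.contOn y hyU) fun t ht => hpos _ (P.mapsTo y hyU t ht)
  rw [P.start y hyU, P.ends y hyU, finrank_euclideanSpace_fin] at hcurve
  refine hcurve.trans ?_
  have hconst : (volume (ball (0 : En n) 1))⁻¹ * ENNReal.ofReal P.C ≠ ∞ :=
    ENNReal.mul_ne_top (ENNReal.inv_ne_top.2 (measure_ball_pos volume 0 one_pos).ne')
      ENNReal.ofReal_ne_top
  gcongr
  rw [← lintegral_const_mul' _ _ hconst, ← lintegral_indicator hΩ]
  refine lintegral_mono_ae ?_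
  filter_upwards [measure_eq_zero_iff_ae_notMem.1 hnull] with x hxnull
  by_cases hx : x ∈ Ω
  · rw [indicator_of_mem hx, mul_assoc, mul_left_comm _ ‖fderiv ℝ φ x‖ₑ]
    gcongr ‖fderiv ℝ φ x‖ₑ * ?_
    exact P.inv_measure_ball_mul_eVariationOn_le hpos hΩU hx hy
  · have hzero : infDist x Uᶜ = 0 := infDist_zero_of_mem fun hxU => hxnull ⟨hxU, hx⟩
    simp [hzero, hx]

lemma enorm_ballMean_sub_apply_le_lintegral_kernel [Nontrivial (En n)]
    (hpos : ∀ x ∈ U, 0 < infDist x Uᶜ) (hnull : volume (U \ Ω) = 0) {φ : En n → ℝ}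
    {K : ℝ≥0} (hφ : LipschitzWith K φ) {y : En n} (hy : y ∈ U) :
    ‖ballMean volume φ y (infDist y Uᶜ / 16) - φ y‖ₑ ≤
      (volume (ball (0 : En n) 1))⁻¹ * ∫⁻ x in Ω, ‖fderiv ℝ φ x‖ₑ * P.kernel x y := by
  have hfy := hpos y hy
  have hball : ball y (infDist y Uᶜ / 16) ≤ᵐ[volume] Ω := by
    refine (ae_le_set.2 (measure_mono_null (sdiff_subset_sdiff_left ?_) hnull))
    exact (ball_subset_ball (by linarith)).trans ball_infDist_compl_subset
  have hdim : (Module.finrank ℝ (En n) : ℝ≥0∞)⁻¹ ≤ 1 :=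
    ENNReal.inv_le_one.2 (Nat.one_le_cast.2 Module.finrank_pos)
  refine (enorm_ballMean_sub_apply_le hφ y (by positivity)).trans ?_
  gcongr
  refine (mul_le_mul_left hdim _).trans ?_
  rw [one_mul, finrank_euclideanSpace_fin]
  refine lintegral_mono' (Measure.restrict_mono_ae hball) fun x => ?_
  exact mul_le_mul_right le_self_add _

lemma exists_enorm_sub_le_lintegral_kernel [Nontrivial (En n)] (hpos : ∀ x ∈ U, 0 < infDist x Uᶜ)
    (hΩ : MeasurableSet Ω) (hΩU : Ω ⊆ U) (hnull : volume (U \ Ω) = 0) :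
    ∃ M : ℝ, 0 < M ∧ ∀ (φ : En n → ℝ) (K : ℝ≥0), LipschitzWith K φ → ∀ y ∈ Ω,
      ‖φ y - ballMean volume φ x0 (infDist x0 Uᶜ / 16)‖ₑ ≤
        ENNReal.ofReal M * ∫⁻ x in Ω, ‖fderiv ℝ φ x‖ₑ * P.kernel x y := by
  set V := volume (ball (0 : En n) 1)
  have hV0 : V ≠ 0 := (measure_ball_pos volume 0 one_pos).ne'
  have hVtop : V ≠ ∞ := measure_ball_lt_top.ne
  set A := V⁻¹ + 2 * ENNReal.ofReal (36 ^ n) * (V⁻¹ * ENNReal.ofReal P.C) with hA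
  have hAtop : A ≠ ∞ := by finiteness
  have hA0 : A ≠ 0 := fun h => ENNReal.inv_ne_zero.2 hVtop (add_eq_zero.1 h).1
  refine ⟨A.toReal, ENNReal.toReal_pos hA0 hAtop, fun φ K hφ y hy => ?_⟩
  rw [ENNReal.ofReal_toReal hAtop, hA, add_mul, mul_assoc _ _ (lintegral _ _)]
  set m := ballMean volume φ y (infDist y Uᶜ / 16)
  calc _ = ‖-(m - φ y) + -(ballMean volume φ x0 (infDist x0 Uᶜ / 16) - m)‖ₑ := by
        congr 1; ring
    _ ≤ ‖m - φ y‖ₑ + ‖ballMean volume φ x0 (infDist x0 Uᶜ / 16) - m‖ₑ :=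
        (enorm_add_le _ _).trans_eq (by rw [enorm_neg, enorm_neg])
    _ ≤ _ := by
        refine add_le_add (P.enorm_ballMean_sub_apply_le_lintegral_kernel hpos hnull hφ (hΩU hy))
          ((P.enorm_ballMean_sub_le_shadowKernel hpos hΩ hΩU hnull hφ hy).trans ?_)
        gcongr with x
        exact le_add_self

end PathSystem

section Duality

lemma exists_strongDual_comp_eq {V F : Type*} [AddCommGroup V] [Module ℝ V]
    [NormedAddCommGroup F] [NormedSpace ℝ F] (T : V →ₗ[ℝ] F) (l : V →ₗ[ℝ] ℝ) {c : ℝ}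
    (hc : 0 ≤ c) (hl : ∀ v, ‖l v‖ ≤ c * ‖T v‖) :
    ∃ g : StrongDual ℝ F, ‖g‖ ≤ c ∧ ∀ v, g (T v) = l v := by
  have hl_ker : l ∈ T.dualMap.range := by
    rw [LinearMap.range_dualMap_eq_dualAnnihilator_ker, Submodule.mem_dualAnnihilator]
    intro v hv
    simpa [LinearMap.mem_ker.1 hv] using hl v
  obtain ⟨f, rfl⟩ := hl_ker
  have hf : ∀ w : T.range, ‖(f ∘ₗ T.range.subtype) w‖ ≤ c * ‖w‖ := by
    rintro ⟨_, v, rfl⟩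
    exact hl v
  obtain ⟨g, hgf, hg⟩ :=
    exists_extension_norm_eq T.range ((f ∘ₗ T.range.subtype).mkContinuous c hf)
  exact ⟨g, hg.trans_le (LinearMap.mkContinuous_norm_le _ hc _), fun v => hgf ⟨T v, v, rfl⟩⟩

variable {α E : Type*} [MeasurableSpace α] [NormedAddCommGroup E] {ν : Measure α}

/-- The inclusion of `L²` into `L¹` over a finite measure. -/
def lpTwoToLpOne [IsFiniteMeasure ν] [NormedSpace ℝ E] : Lp E 2 ν →L[ℝ] Lp E 1 ν :=
  LinearMap.mkContinuous
    { toFun := fun v => ((Lp.memLp v).mono_exponent one_le_two).toLp v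
      map_add' := fun v w => by
        rw [← MemLp.toLp_add, MemLp.toLp_eq_toLp_iff]
        exact Lp.coeFn_add v w
      map_smul' := fun a v => by
        rw [RingHom.id_apply, ← MemLp.toLp_const_smul, MemLp.toLp_eq_toLp_iff]
        exact Lp.coeFn_smul a v }
    (ν univ ^ (1 / (1 : ℝ≥0∞).toReal - 1 / (2 : ℝ≥0∞).toReal)).toReal fun v => by
      rw [LinearMap.coe_mk, AddHom.coe_mk, Lp.norm_toLp, Lp.norm_def, ← ENNReal.toReal_mul,
        mul_comm]
      exact ENNReal.toReal_mono
        (ENNReal.mul_ne_top (Lp.eLpNorm_ne_top v) (by norm_num))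
        (eLpNorm_le_eLpNorm_mul_rpow_measure_univ one_le_two (Lp.aestronglyMeasurable v))

lemma lpTwoToLpOne_toLp [IsFiniteMeasure ν] [NormedSpace ℝ E] {f : α → E} (hf : MemLp f 2 ν) :
    lpTwoToLpOne (hf.toLp f) = (hf.mono_exponent one_le_two).toLp f :=
  (MemLp.toLp_eq_toLp_iff (Lp.memLp _ |>.mono_exponent one_le_two) _).2 hf.coeFn_toLp

variable [InnerProductSpace ℝ E]

lemma real_inner_inv_norm_smul_self (x : E) : ⟪x, ‖x‖⁻¹ • x⟫ = ‖x‖ := by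
  rw [real_inner_smul_right, real_inner_self_eq_norm_mul_norm, inv_mul_eq_div, mul_self_div_self]

lemma ae_norm_le_of_integral_inner_le [IsFiniteMeasure ν] {h : α → E} (hh : MemLp h 2 ν) {c : ℝ}
    (hc0 : 0 ≤ c)
    (hc : ∀ f : α → E, MemLp f 2 ν → ∫ x, ⟪h x, f x⟫ ∂ν ≤ c * ∫ x, ‖f x‖ ∂ν) :
    ∀ᵐ x ∂ν, ‖h x‖ ≤ c := by
  refine ae_le_of_forall_setIntegral_le (hh.integrable one_le_two).norm (integrable_const c)
    fun s hs _ => ?_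
  set f : α → E := fun x => ‖h x‖⁻¹ • h x
  have hf_norm (x : α) : ‖f x‖ ≤ 1 := mem_closedBall_zero_iff.1 (inv_norm_smul_mem_unitClosedBall _)
  have hf : MemLp f 2 ν :=
    .of_bound (hh.aestronglyMeasurable.norm.inv₀.smul hh.aestronglyMeasurable) 1
      (.of_forall hf_norm)
  calc ∫ x in s, ‖h x‖ ∂ν = ∫ x, ⟪h x, s.indicator f x⟫ ∂ν := by
        rw [← integral_indicator hs]
        congr with x
        by_cases hx : x ∈ s <;> simp [hx, f, real_inner_inv_norm_smul_self]
    _ ≤ c * ∫ x, ‖s.indicator f x‖ ∂ν := hc _ (hf.indicator hs)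
    _ = c * ∫ x in s, ‖f x‖ ∂ν := by
        simp only [norm_indicator_eq_indicator_norm, integral_indicator hs]
    _ ≤ c * ∫ _ in s, 1 ∂ν := mul_le_mul_of_nonneg_left (integral_mono
        (hf.integrable one_le_two).norm.integrableOn (integrable_const 1) hf_norm) hc0
    _ = ∫ _ in s, c ∂ν := by rw [← integral_const_mul, mul_one]

lemma exists_ae_norm_le_forall_integral_inner_eq [IsFiniteMeasure ν] [CompleteSpace E]
    (g : StrongDual ℝ (Lp E 1 ν)) :
    ∃ h : α → E, StronglyMeasurable h ∧ (∀ᵐ x ∂ν, ‖h x‖ ≤ ‖g‖) ∧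
      ∀ (f : α → E) (hf : MemLp f 2 ν),
        ∫ x, ⟪h x, f x⟫ ∂ν = g ((hf.mono_exponent one_le_two).toLp f) := by
  set h : Lp E 2 ν := (InnerProductSpace.toDual ℝ _).symm (g.comp lpTwoToLpOne)
  have hg : ∀ (f : α → E) (hf : MemLp f 2 ν),
      ∫ x, ⟪h x, f x⟫ ∂ν = g ((hf.mono_exponent one_le_two).toLp f) := fun f hf => calc
    ∫ x, ⟪h x, f x⟫ ∂ν = ∫ x, ⟪h x, hf.toLp f x⟫ ∂ν :=
      integral_congr_ae (hf.coeFn_toLp.mono fun x hx => by simp only [hx])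
    _ = ⟪h, hf.toLp f⟫ := (L2.inner_def _ _).symm
    _ = g (lpTwoToLpOne (hf.toLp f)) := InnerProductSpace.toDual_symm_apply
    _ = _ := by rw [lpTwoToLpOne_toLp]
  refine ⟨h, Lp.stronglyMeasurable h,
    ae_norm_le_of_integral_inner_le (Lp.memLp h) (norm_nonneg g) fun f hf => ?_, hg⟩
  calc ∫ x, ⟪h x, f x⟫ ∂ν ≤ ‖g‖ * ‖(hf.mono_exponent one_le_two).toLp f‖ :=
        (hg f hf).trans_le (le_of_abs_le (g.le_opNorm _))
    _ = ‖g‖ * ∫ x, ‖f x‖ ∂ν := by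
        rw [← L1.norm_of_fun_eq_integral_norm (hf.integrable one_le_two)]
        rfl

end Duality

section LipschitzGradient

variable {F : Type*} [NormedAddCommGroup F] [InnerProductSpace ℝ F]

/-- The space of real-valued Lipschitz functions on `F`, as a subspace of all functions. -/
def lipschitzSubmodule (F : Type*) [PseudoEMetricSpace F] : Submodule ℝ (F → ℝ) where
  carrier := {φ | ∃ K : ℝ≥0, LipschitzWith K φ}
  zero_mem' := ⟨0, LipschitzWith.const 0⟩
  add_mem' := fun ⟨K, hK⟩ ⟨L, hL⟩ => ⟨K + L, hK.add hL⟩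
  smul_mem' := fun c _ ⟨K, hK⟩ => ⟨‖c‖₊ * K, (lipschitzWith_smul c).comp hK⟩

section Complete

variable [CompleteSpace F]

lemma enorm_gradient (φ : F → ℝ) (x : F) : ‖gradient φ x‖ₑ = ‖fderiv ℝ φ x‖ₑ :=
  LinearIsometryEquiv.enorm_map _ _

variable [MeasurableSpace F] [BorelSpace F]

lemma measurable_gradient (φ : F → ℝ) : Measurable (gradient φ) :=
  (LinearIsometryEquiv.continuous _).measurable.comp (measurable_fderiv ℝ φ)

lemma memLp_gradient [SecondCountableTopology F] {φ : F → ℝ} {K : ℝ≥0} (hφ : LipschitzWith K φ)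
    (p : ℝ≥0∞) (ν : Measure F) [IsFiniteMeasure ν] : MemLp (gradient φ) p ν :=
  .of_bound (measurable_gradient φ).aestronglyMeasurable K <| .of_forall fun x => by
    simpa only [gradient, LinearIsometryEquiv.norm_map] using norm_fderiv_le_of_lipschitz ℝ hφ

end Complete

variable [FiniteDimensional ℝ F] [MeasurableSpace F] [BorelSpace F]
  {μ m ν : Measure F} [μ.IsAddHaarMeasure]

/-- The gradient of Lipschitz functions as a linear map into `L¹(ν)`; linearity is Rademacher's
theorem. -/
def gradientLpOne [IsFiniteMeasure ν] (hν : ν ≪ μ) : lipschitzSubmodule F →ₗ[ℝ] Lp F 1 ν where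
  toFun φ := (memLp_gradient φ.2.choose_spec 1 ν).toLp (gradient (φ : F → ℝ))
  map_add' φ ψ := by
    rw [← MemLp.toLp_add, MemLp.toLp_eq_toLp_iff]
    filter_upwards [hν.ae_le φ.2.choose_spec.ae_differentiableAt,
      hν.ae_le ψ.2.choose_spec.ae_differentiableAt] with x hφ hψ
    simp only [Submodule.coe_add, Pi.add_apply, gradient, fderiv_add hφ hψ, map_add]
  map_smul' c φ := by
    rw [RingHom.id_apply, ← MemLp.toLp_const_smul, MemLp.toLp_eq_toLp_iff]
    filter_upwards [hν.ae_le φ.2.choose_spec.ae_differentiableAt] with x hφ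
    simp only [Submodule.coe_smul, Pi.smul_apply, gradient, fderiv_const_smul hφ, map_smul]

lemma enorm_gradientLpOne [IsFiniteMeasure ν] (hν : ν ≪ μ) (φ : lipschitzSubmodule F) :
    ‖gradientLpOne hν φ‖ₑ = ∫⁻ x, ‖fderiv ℝ (φ : F → ℝ) x‖ₑ ∂ν := by
  rw [gradientLpOne, LinearMap.coe_mk, AddHom.coe_mk, Lp.enorm_toLp, eLpNorm_one_eq_lintegral_enorm]
  simp only [enorm_gradient]

lemma exists_forall_integral_inner_gradient_eq [IsFiniteMeasure ν] (hν : ν ≪ μ)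
    (l : lipschitzSubmodule F →ₗ[ℝ] ℝ) {c : ℝ} (hc : 0 ≤ c)
    (hl : ∀ φ : lipschitzSubmodule F,
      ‖l φ‖ₑ ≤ ENNReal.ofReal c * ∫⁻ x, ‖fderiv ℝ (φ : F → ℝ) x‖ₑ ∂ν) :
    ∃ h : F → F, Measurable h ∧ (∀ᵐ x ∂ν, ‖h x‖ ≤ c) ∧
      ∀ φ : lipschitzSubmodule F, ∫ x, ⟪h x, gradient (φ : F → ℝ) x⟫ ∂ν = l φ := by
  have hl_norm (φ : lipschitzSubmodule F) : ‖l φ‖ ≤ c * ‖gradientLpOne hν φ‖ := by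
    rw [← ENNReal.ofReal_le_ofReal_iff (by positivity), ENNReal.ofReal_mul hc, ofReal_norm,
      ofReal_norm, enorm_gradientLpOne]
    exact hl φ
  obtain ⟨g, hgc, hg⟩ := exists_strongDual_comp_eq (gradientLpOne hν) l hc hl_norm
  obtain ⟨h, h_meas, h_le, h_eq⟩ := exists_ae_norm_le_forall_integral_inner_eq g
  exact ⟨h, h_meas.measurable, h_le.mono fun x hx => hx.trans hgc, fun φ =>
    (h_eq _ (memLp_gradient φ.2.choose_spec 2 ν)).trans (hg φ)⟩

lemma exists_forall_integral_inner_gradient_eq_of_weight (hm : m ≪ μ) {w : F → ℝ≥0∞}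
    (hw : Measurable w) (hw_fin : ∫⁻ x, w x ∂m ≠ ⊤)
    (l : lipschitzSubmodule F →ₗ[ℝ] ℝ) {c : ℝ} (hc : 0 ≤ c)
    (hl : ∀ φ : lipschitzSubmodule F,
      ‖l φ‖ₑ ≤ ENNReal.ofReal c * ∫⁻ x, ‖fderiv ℝ (φ : F → ℝ) x‖ₑ * w x ∂m) :
    ∃ u : F → F, Measurable u ∧ (∀ᵐ x ∂m, ‖u x‖ₑ ≤ ENNReal.ofReal c * w x) ∧
      ∀ φ : lipschitzSubmodule F, ∫ x, ⟪u x, gradient (φ : F → ℝ) x⟫ ∂m = l φ := by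
  have : IsFiniteMeasure (m.withDensity w) := isFiniteMeasure_withDensity hw_fin
  have hw_lt_top : ∀ᵐ x ∂m, w x < ⊤ := ae_lt_top hw hw_fin
  obtain ⟨h, h_meas, h_le, h_eq⟩ := exists_forall_integral_inner_gradient_eq
    ((withDensity_absolutelyContinuous m w).trans hm) l hc fun φ => by
      rw [lintegral_withDensity_eq_lintegral_mul _ hw (measurable_fderiv ℝ _).enorm]
      simpa only [Pi.mul_apply, mul_comm (w _)] using hl φ
  refine ⟨fun x => (w x).toReal • h x, hw.ennreal_toReal.smul h_meas, ?_, fun φ => ?_⟩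
  · filter_upwards [(ae_withDensity_iff hw).1 h_le, hw_lt_top] with x hx hx_top
    rw [enorm_smul, Real.enorm_of_nonneg ENNReal.toReal_nonneg, ENNReal.ofReal_toReal hx_top.ne,
      mul_comm]
    rcases eq_or_ne (w x) 0 with h0 | h0
    · simp [h0]
    · rw [← ofReal_norm]
      exact mul_le_mul_left (ENNReal.ofReal_le_ofReal (hx h0)) _
  · rw [← h_eq φ, integral_withDensity_eq_integral_toReal_smul hw hw_lt_top]
    simp only [real_inner_smul_left, smul_eq_mul]

end LipschitzGradient

section SignedMeasure

lemma integrableOn_of_continuous_of_isBounded {X E : Type*} [PseudoMetricSpace X] [ProperSpace X]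
    [MeasurableSpace X] [OpensMeasurableSpace X] [NormedAddCommGroup E] {φ : X → E}
    (hφ : Continuous φ) {s : Set X} (hs : Bornology.IsBounded s) (m : Measure X)
    [IsFiniteMeasureOnCompacts m] : IntegrableOn φ s m :=
  (hφ.continuousOn.integrableOn_compact' hs.isCompact_closure measurableSet_closure).mono_set
    subset_closure

lemma posPart_real_eq_negPart_real_of_apply_eq_zero {α : Type*} [MeasurableSpace α]
    {μ : SignedMeasure α} {s : Set α} (hs : MeasurableSet s) (hμ : μ s = 0) :
    μ.toJordanDecomposition.posPart.real s = μ.toJordanDecomposition.negPart.real s := by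
  rwa [← μ.toSignedMeasure_toJordanDecomposition, JordanDecomposition.toSignedMeasure,
    _root_.sub_apply, Measure.toSignedMeasure_apply_measurable hs,
    Measure.toSignedMeasure_apply_measurable hs, sub_eq_zero] at hμ

variable {n : ℕ} {Ω : Set (En n)}

/-- The functional `φ ↦ ∫_Ω φ dμ` on Lipschitz functions. -/
def signedIntegralLinearMap (hΩ : Bornology.IsBounded Ω) (μ : SignedMeasure (En n)) :
    lipschitzSubmodule (En n) →ₗ[ℝ] ℝ where
  toFun φ := signedIntegral μ Ω φ
  map_add' φ ψ := by
    have hint (φ : lipschitzSubmodule (En n)) (m : Measure (En n)) [IsFiniteMeasure m] :=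
      integrableOn_of_continuous_of_isBounded φ.2.choose_spec.continuous hΩ m
    simp only [signedIntegral, Submodule.coe_add, Pi.add_apply]
    rw [integral_add (hint φ _) (hint ψ _), integral_add (hint φ _) (hint ψ _)]
    ring
  map_smul' c φ := by
    simp only [signedIntegral, Submodule.coe_smul, Pi.smul_apply, smul_eq_mul, RingHom.id_apply,
      integral_const_mul]
    ring

lemma signedIntegral_sub_const (hΩ : MeasurableSet Ω) (hΩbdd : Bornology.IsBounded Ω)
    {μ : SignedMeasure (En n)} (hμ : μ Ω = 0) {φ : En n → ℝ} (hφ : Continuous φ) (a : ℝ) :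
    signedIntegral μ Ω (fun x => φ x - a) = signedIntegral μ Ω φ := by
  have hint (m : Measure (En n)) [IsFiniteMeasure m] :=
    integrableOn_of_continuous_of_isBounded hφ hΩbdd m
  simp only [signedIntegral]
  rw [integral_sub (hint _) (integrable_const a), integral_sub (hint _) (integrable_const a)]
  simp only [integral_const, measureReal_restrict_apply_univ,
    posPart_real_eq_negPart_real_of_apply_eq_zero hΩ hμ, sub_sub_sub_cancel_right]

lemma enorm_signedIntegral_le (μ : SignedMeasure (En n)) (φ : En n → ℝ) :
    ‖signedIntegral μ Ω φ‖ₑ ≤ ∫⁻ y in Ω, ‖φ y‖ₑ ∂μ.totalVariation := calc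
  ‖signedIntegral μ Ω φ‖ₑ ≤ (∫⁻ y in Ω, ‖φ y‖ₑ ∂μ.toJordanDecomposition.posPart) +
      ∫⁻ y in Ω, ‖φ y‖ₑ ∂μ.toJordanDecomposition.negPart :=
    enorm_sub_le.trans (add_le_add (enorm_integral_le_lintegral_enorm _)
      (enorm_integral_le_lintegral_enorm _))
  _ = ∫⁻ y in Ω, ‖φ y‖ₑ ∂μ.totalVariation := by
    rw [← lintegral_add_measure, ← Measure.restrict_add, SignedMeasure.totalVariation]

lemma enorm_signedIntegral_le_of_totalVariation_le (hΩ : MeasurableSet Ω)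
    (hΩbdd : Bornology.IsBounded Ω) {μ : SignedMeasure (En n)} (hμ : μ Ω = 0)
    {μ0 : Measure (En n)} {c : ℝ≥0∞} (htv : μ.totalVariation ≤ c • μ0) {φ : En n → ℝ}
    (hφ : Continuous φ) (a : ℝ) :
    ‖signedIntegral μ Ω φ‖ₑ ≤ c * ∫⁻ y in Ω, ‖φ y - a‖ₑ ∂μ0 := calc
  ‖signedIntegral μ Ω φ‖ₑ ≤ ∫⁻ y in Ω, ‖φ y - a‖ₑ ∂μ.totalVariation := by
    rw [← signedIntegral_sub_const hΩ hΩbdd hμ hφ a]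
    exact enorm_signedIntegral_le μ _
  _ ≤ ∫⁻ y in Ω, ‖φ y - a‖ₑ ∂(c • μ0) :=
    lintegral_mono' (Measure.restrict_mono le_rfl htv) le_rfl
  _ = c * ∫⁻ y in Ω, ‖φ y - a‖ₑ ∂μ0 := by
    rw [Measure.restrict_smul, lintegral_smul_measure, smul_eq_mul]

end SignedMeasure

section MeasurableCover

lemma compl_nonempty_of_measure_sdiff_eq_zero {E : Type*} [NormedAddCommGroup E] [NormedSpace ℝ E]
    [FiniteDimensional ℝ E] [Nontrivial E] [MeasurableSpace E] [BorelSpace E] {μ : Measure E}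
    [μ.IsAddHaarMeasure] {s t : Set E} (hs : Bornology.IsBounded s) (hst : μ (t \ s) = 0) :
    tᶜ.Nonempty := by
  have := FiniteDimensional.proper_real E
  have := NormedSpace.noncompactSpace ℝ E
  by_contra! h
  rw [compl_empty_iff.1 h, ← compl_eq_univ_sdiff] at hst
  refine (measure_univ_of_isAddLeftInvariant μ).not_lt ?_
  calc μ univ ≤ μ s + μ sᶜ := measure_univ_le_add_compl s
    _ < ∞ := by simpa only [hst, add_zero] using hs.measure_lt_top

variable {n : ℕ} {Ω Ot : Set (En n)}

lemma hatSet_eq_interior (h : Otᶜ.Nonempty) : hatSet Ot = interior Ot := by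
  ext x
  rw [interior_eq_compl_closure_compl, mem_compl_iff, infDist_pos_iff_notMem_closure h]
  exact ⟨And.right, fun hx => ⟨by_contra fun hxO => hx.ne' (infDist_zero_of_mem hxO), hx⟩⟩

lemma isOpen_hatSet_and_subset_hatSet (hn : 1 ≤ n) (hΩ : IsOpen Ω) (hΩbdd : Bornology.IsBounded Ω)
    (hcov : Ω ⊆ Ot) (hnull : volume (Ot \ Ω) = 0) : IsOpen (hatSet Ot) ∧ Ω ⊆ hatSet Ot := by
  have : Nonempty (Fin n) := ⟨⟨0, hn⟩⟩
  rw [hatSet_eq_interior (compl_nonempty_of_measure_sdiff_eq_zero hΩbdd hnull)]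
  exact ⟨isOpen_interior, interior_maximal hcov hΩ⟩

end MeasurableCover

namespace PathSystem

variable {n : ℕ} {Ω U : Set (En n)} {x0 : En n} (P : PathSystem Ω U x0)

lemma lintegral_lintegral_mul_kernel_swap (μ0 : Measure (En n)) [SFinite μ0] {g : En n → ℝ≥0∞}
    (hg : Measurable g) :
    ∫⁻ y in Ω, ∫⁻ x in Ω, g x * P.kernel x y ∂volume ∂μ0 = ∫⁻ x in Ω, g x * P.potential μ0 x := by
  have hmeas : Measurable fun q : En n × En n => g q.1 * P.kernel q.1 q.2 :=
    (hg.comp measurable_fst).mul P.measurable_kernel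
  calc ∫⁻ y in Ω, ∫⁻ x in Ω, g x * P.kernel x y ∂volume ∂μ0
      = ∫⁻ x in Ω, ∫⁻ y in Ω, g x * P.kernel x y ∂μ0 :=
        (lintegral_lintegral_swap (f := fun x y => g x * P.kernel x y) hmeas.aemeasurable).symm
    _ = ∫⁻ x in Ω, g x * P.potential μ0 x := lintegral_congr fun x =>
        lintegral_const_mul (g x) P.measurable_kernel.of_uncurry_left

lemma exists_enorm_signedIntegral_le_lintegral_potential [Nontrivial (En n)]
    (hpos : ∀ x ∈ U, 0 < infDist x Uᶜ) (hΩ : MeasurableSet Ω) (hΩbdd : Bornology.IsBounded Ω)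
    (hΩU : Ω ⊆ U) (hnull : volume (U \ Ω) = 0) :
    ∃ M : ℝ, 0 < M ∧ ∀ (μ0 : Measure (En n)) [SFinite μ0] (κ : ℝ) (μ : SignedMeasure (En n)),
      μ Ω = 0 → μ.totalVariation ≤ ENNReal.ofReal κ • μ0 →
      ∀ (φ : En n → ℝ) (K : ℝ≥0), LipschitzWith K φ →
        ‖signedIntegral μ Ω φ‖ₑ ≤
          ENNReal.ofReal (M * κ) * ∫⁻ x in Ω, ‖fderiv ℝ φ x‖ₑ * P.potential μ0 x := by
  obtain ⟨M, hM, hpoint⟩ := P.exists_enorm_sub_le_lintegral_kernel hpos hΩ hΩU hnull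
  refine ⟨M, hM, fun μ0 _ κ μ hμ htv φ K hφ => ?_⟩
  set a := ballMean volume φ x0 (infDist x0 Uᶜ / 16)
  calc ‖signedIntegral μ Ω φ‖ₑ ≤ ENNReal.ofReal κ * ∫⁻ y in Ω, ‖φ y - a‖ₑ ∂μ0 :=
        enorm_signedIntegral_le_of_totalVariation_le hΩ hΩbdd hμ htv hφ.continuous a
    _ ≤ ENNReal.ofReal κ * ∫⁻ y in Ω, ENNReal.ofReal M *
          (∫⁻ x in Ω, ‖fderiv ℝ φ x‖ₑ * P.kernel x y) ∂μ0 :=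
        mul_le_mul_right (setLIntegral_mono' hΩ (hpoint φ K hφ)) _
    _ = ENNReal.ofReal (M * κ) * ∫⁻ x in Ω, ‖fderiv ℝ φ x‖ₑ * P.potential μ0 x := by
        rw [lintegral_const_mul' _ _ ENNReal.ofReal_ne_top,
          P.lintegral_lintegral_mul_kernel_swap μ0 (measurable_fderiv ℝ φ).enorm, ← mul_assoc,
          mul_comm M, ENNReal.ofReal_mul' hM.le]

end PathSystem

theorem stmt_9_general {n : ℕ} (hn : 1 ≤ n) {Ω U : Set (En n)} (hΩ : MeasurableSet Ω)
    (hΩbdd : Bornology.IsBounded Ω) (hU : IsOpen U) (hΩU : Ω ⊆ U) (hnull : volume (U \ Ω) = 0)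
    {x0 : En n} (hx0 : x0 ∈ U) (P : PathSystem Ω U x0) :
    ∃ C : ℝ, 0 < C ∧ ∀ (μ0 : Measure (En n)) [IsFiniteMeasure μ0],
      (∫⁻ x in Ω, geoDist U x0 x ∂μ0) < ⊤ →
      ∀ κ : ℝ, 0 < κ → ∀ μ : SignedMeasure (En n),
        μ Ω = 0 → μ.totalVariation ≤ ENNReal.ofReal κ • μ0 →
        ∃ u : En n → En n, Measurable u ∧
          (∀ᵐ x ∂volume.restrict Ω,
            ENNReal.ofReal ‖u x‖ ≤ ENNReal.ofReal (C * κ) * wZero μ0 Ω U P.γ x) ∧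
          ∀ φ : En n → ℝ, (∃ K : ℝ≥0, LipschitzWith K φ) →
            ∫ x in Ω, ⟪u x, gradient φ x⟫ = - signedIntegral μ Ω φ := by
  have : Nonempty (Fin n) := ⟨⟨0, hn⟩⟩
  have hpos (x : En n) (hx : x ∈ U) : 0 < infDist x Uᶜ :=
    (hU.isClosed_compl.notMem_iff_infDist_pos
      (compl_nonempty_of_measure_sdiff_eq_zero hΩbdd hnull)).1 (notMem_compl_iff.2 hx)
  obtain ⟨M, hM, hbound⟩ :=
    P.exists_enorm_signedIntegral_le_lintegral_potential hpos hΩ hΩbdd hΩU hnull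
  refine ⟨M, hM, fun μ0 _ hgeo κ hκ μ hμ htv => ?_⟩
  obtain ⟨u, hu_meas, hu_le, hu_eq⟩ := exists_forall_integral_inner_gradient_eq_of_weight
    (Measure.absolutelyContinuous_restrict (μ := volume) (s := Ω)) (P.measurable_potential μ0)
    (P.lintegral_potential_lt_top hpos hx0 hΩ hΩU hΩbdd.measure_lt_top.ne μ0 hgeo).ne
    (-signedIntegralLinearMap hΩbdd μ) (mul_pos hM hκ).le fun φ => by
      rw [LinearMap.neg_apply, enorm_neg]
      exact hbound μ0 κ μ hμ htv φ _ φ.2.choose_spec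
  refine ⟨u, hu_meas, hu_le.mono fun x hx => ?_, fun φ hφ => hu_eq ⟨φ, hφ⟩⟩
  rw [ofReal_norm]
  exact hx.trans (mul_le_mul_right (P.potential_le_wZero μ0 x) _)

/-- In the setting of Proposition 2.1 (normalization, path system,
`d_Ω̂ ∈ L¹(μ0)`, weight `w0 = I₁μ0 + ω d̂^{1−n}`), for every `κ > 0` and every finite
signed Radon measure `μ` on `Ω` with `μ(Ω) = 0`, `|μ| ≤ κ μ0`, there is a measurable
vector field `u` with `|u| ≤ C κ w0` a.e. on `Ω` such that `∫_Ω u·∇φ = −∫_Ω φ dμ` for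
every Lipschitz function `φ : ℝⁿ → ℝ`. -/
theorem stmt_9 (n : ℕ) (hn : 1 ≤ n) (Ω Ot : Set (En n))
    (hΩopen : IsOpen Ω) (hΩconn : IsConnected Ω) (hΩbdd : Bornology.IsBounded Ω)
    (hcov : Ω ⊆ Ot) (hcovnull : volume (Ot \ Ω) = 0)
    (x0 : En n) (hx0 : x0 ∈ Ω)
    (hnorm1 : Metric.closedBall x0 1 ⊆ Ω)
    (hnorm2 : 15 ≤ Metric.infDist x0 (hatSet Ot)ᶜ)
    (P : PathSystem Ω (hatSet Ot) x0)
    (μ0 : Measure (En n)) [IsFiniteMeasure μ0] (hμ0ne : μ0 ≠ 0) (hμ0supp : μ0 Ωᶜ = 0)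
    (hgeo : (∫⁻ x in Ω, geoDist (hatSet Ot) x0 x ∂μ0) < ⊤) :
    ∃ C : ℝ, 0 < C ∧
      ∀ κ : ℝ, 0 < κ →
        ∀ μ : MeasureTheory.SignedMeasure (En n),
          μ Ω = 0 → μ.totalVariation ≤ ENNReal.ofReal κ • μ0 →
          ∃ u : En n → En n, Measurable u ∧
            (∀ᵐ x ∂volume.restrict Ω,
              ENNReal.ofReal ‖u x‖ ≤
                ENNReal.ofReal (C * κ) * wZero μ0 Ω (hatSet Ot) P.γ x) ∧
            ∀ φ : En n → ℝ, (∃ K : ℝ≥0, LipschitzWith K φ) →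
              ∫ x in Ω, ⟪u x, gradient φ x⟫ = - signedIntegral μ Ω φ := by
  obtain ⟨hUopen, hΩU⟩ := isOpen_hatSet_and_subset_hatSet hn hΩopen hΩbdd hcov hcovnull
  obtain ⟨C, hC, hexists⟩ := stmt_9_general hn hΩopen.measurableSet hΩbdd hUopen hΩU
    (measure_mono_null (sdiff_subset_sdiff_left (sep_subset _ _)) hcovnull) (hΩU hx0) P
  exact ⟨C, hC, hexists μ0 hgeo⟩
end
end

section
/- Let Ω ⊂ ℝⁿ be a bounded domain, a ∈ Ω, 0 < ε < n−1, c > 0 and r0 > 0. Let μ0 be a finite positive Radon measure on Ω with μ0({a}) = 0, μ0(B(a,r)) ≥ c r^{n−1−ε} for all 0 < r < r0, and 0 < m0 := μ0(B(a,r0)) < μ0(Ω)/2. Define the signed measure μ := μ0⌞B(a,r0) − (m0/(μ0(Ω) − m0)) μ0⌞(Ω \ B(a,r0)). Then μ(Ω) = 0, |μ| ≤ μ0, μ(B(a,r)) ≥ c r^{n−1−ε} for all 0 < r < r0, and there is no essentially bounded measurable vector field u : Ω → ℝⁿ satisfying ∫_Ω u·∇φ dx = −∫_Ω φ dμ for all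 φ ∈ C^∞(ℝⁿ) with compact support. -/
open MeasureTheory Metric Set
open scoped RealInnerProductSpace ENNReal NNReal

noncomputable section

/-- The signed measure `μ := μ0⌞B(a,r0) − (m0/(μ0(Ω) − m0)) μ0⌞(Ω \ B(a,r0))`, where
`m0 = μ0(B(a,r0))`. -/
def ctrMeasure {n : ℕ} (μ0 : MeasureTheory.Measure (En n))
    [MeasureTheory.IsFiniteMeasure μ0] (Ω : Set (En n)) (a : En n) (r0 : ℝ) :
    MeasureTheory.SignedMeasure (En n) :=
  (μ0.restrict (Metric.ball a r0)).toSignedMeasure -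
    ((μ0 (Metric.ball a r0)).toReal /
        ((μ0 Ω).toReal - (μ0 (Metric.ball a r0)).toReal)) •
      (μ0.restrict (Ω \ Metric.ball a r0)).toSignedMeasure

/-!
Test the weak equation with a cutoff `φ` that equals `1` on `closedBall a r`, is supported in
`closedBall a (2 * r)` and has gradient `O(1 / r)`. As `μ` is nonnegative on `ball a r0`, for
`2 * r ≤ r0` the right-hand side has absolute value at least `μ (closedBall a r)`, while for bounded
`u` the left-hand side is `O(r ^ n / r)`. Hence `μ (ball a r) = O(r ^ (n - 1))` as `r → 0`,
which is incompatible with `μ (ball a r) ≥ c * r ^ (n - 1 - ε)`. The cutoff replaces the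
Gauss–Green formula on balls.
-/

lemma exists_mul_rpow_lt_mul_rpow_sub {c ε R : ℝ} (hc : 0 < c) (hε : 0 < ε) (hR : 0 < R)
    (C s : ℝ) : ∃ r, 0 < r ∧ r < R ∧ C * r ^ s < c * r ^ (s - ε) := by
  have tendsto_zero : Filter.Tendsto (fun r : ℝ ↦ C * r ^ ε) (nhds 0) (nhds 0) := by
    simpa [Real.zero_rpow hε.ne'] using
      (Real.continuousAt_rpow_const 0 ε (Or.inr hε.le)).tendsto.const_mul C
  obtain ⟨r, hr, hr0, hrR⟩ := ((tendsto_zero.mono_left nhdsWithin_le_nhds).eventually_lt_const hc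
    |>.and (Ioo_mem_nhdsGT hR)).exists
  refine ⟨r, hr0, hrR, ?_⟩
  calc C * r ^ s = C * r ^ ε * r ^ (s - ε) := by
        rw [mul_assoc, ← Real.rpow_add hr0, add_sub_cancel]
    _ < c * r ^ (s - ε) := by gcongr

section WeakNeumann

variable {E : Type*} [NormedAddCommGroup E] [NormedSpace ℝ E]

lemma contDiffBump_apply_eq_apply_smul_sub [HasContDiffBump E] {a b : E} (f : ContDiffBump a)
    (g : ContDiffBump b) (hfg : f.rOut / f.rIn = g.rOut / g.rIn) (hg : g.rIn = 1) (x : E) :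
    f x = g (b + f.rIn⁻¹ • (x - a)) := by
  simp only [ContDiffBump.apply, hfg, hg, inv_one, one_smul, add_sub_cancel_left]

lemma exists_forall_norm_fderiv_contDiffBump_le [FiniteDimensional ℝ E] {ρ : ℝ} (hρ : 1 < ρ) :
    ∃ C : ℝ, ∀ (a : E) (f : ContDiffBump a), f.rOut / f.rIn = ρ →
      ∀ x, ‖fderiv ℝ f x‖ ≤ C / f.rIn := by
  let unitBump : ContDiffBump (0 : E) := ⟨1, ρ, one_pos, hρ⟩
  obtain ⟨C, hC⟩ := ContDiff.lipschitzWith_of_hasCompactSupport (𝕂 := ℝ) (n := 1)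
    unitBump.hasCompactSupport unitBump.contDiff one_ne_zero
  refine ⟨C, fun a f hf x ↦ ?_⟩
  have lipschitz : LipschitzWith (C * ‖f.rIn⁻¹‖₊) f := by
    refine LipschitzWith.of_dist_le_mul fun y z ↦ ?_
    have hfg : f.rOut / f.rIn = unitBump.rOut / unitBump.rIn := by simp [hf, unitBump]
    rw [contDiffBump_apply_eq_apply_smul_sub f unitBump hfg rfl,
      contDiffBump_apply_eq_apply_smul_sub f unitBump hfg rfl]
    refine (hC.dist_le_mul _ _).trans_eq ?_
    rw [dist_add_left, dist_smul₀, dist_sub_right, NNReal.coe_mul, coe_nnnorm, mul_assoc]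
  simpa [abs_of_pos f.rIn_pos, div_eq_mul_inv] using norm_fderiv_le_of_lipschitz ℝ lipschitz

variable [MeasurableSpace E]

/-- The weak form of `div u = P - N` in `Ω` with `u · ν = 0` on `∂Ω`, where `P` and `N` are positive
measures and `vol` is the reference measure on `E`. The pairing `u · ∇φ` is written as
`fderiv ℝ φ x (u x)`, so that no inner product is needed. -/
def IsWeakNeumannSolution (vol : Measure E) (Ω : Set E) (P N : Measure E) (u : E → E) : Prop :=
  ∀ φ : E → ℝ, ContDiff ℝ (⊤ : ℕ∞) φ → HasCompactSupport φ →
    ∫ x in Ω, fderiv ℝ φ x (u x) ∂vol = -(∫ x, φ x ∂P - ∫ x, φ x ∂N)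

variable [BorelSpace E] {vol P N : Measure E} {Ω : Set E} {u : E → E} {M : ℝ}

lemma abs_setIntegral_fderiv_apply_le [IsFiniteMeasureOnCompacts vol] {φ : E → ℝ} {L : ℝ}
    (hM : 0 ≤ M) (hu : ∀ᵐ x ∂vol.restrict Ω, ‖u x‖ ≤ M) (hφ : HasCompactSupport φ)
    (hL : ∀ x, ‖fderiv ℝ φ x‖ ≤ L) :
    |∫ x in Ω, fderiv ℝ φ x (u x) ∂vol| ≤ L * M * vol.real (tsupport φ) := by
  have hL0 : 0 ≤ L := (norm_nonneg _).trans (hL 0)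
  have hmeas : MeasurableSet (tsupport φ) := (isClosed_tsupport φ).measurableSet
  have hfin : vol (tsupport φ) ≠ ∞ := hφ.isCompact.measure_lt_top.ne
  have pointwise : ∀ᵐ x ∂vol.restrict Ω,
      ‖fderiv ℝ φ x (u x)‖ ≤ (tsupport φ).indicator (fun _ ↦ L * M) x := by
    filter_upwards [hu] with x hx
    by_cases hxφ : x ∈ tsupport φ
    · rw [indicator_of_mem hxφ]
      exact (fderiv ℝ φ x).le_of_opNorm_le_of_le (hL x) hx
    · simp [fderiv_of_notMem_tsupport ℝ hxφ, hxφ]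
  have integrable : Integrable ((tsupport φ).indicator fun _ ↦ L * M) vol :=
    (integrable_indicator_iff hmeas).2 (integrableOn_const hfin)
  calc |∫ x in Ω, fderiv ℝ φ x (u x) ∂vol|
      ≤ ∫ x in Ω, (tsupport φ).indicator (fun _ ↦ L * M) x ∂vol :=
        norm_integral_le_of_norm_le integrable.restrict pointwise
    _ ≤ ∫ x, (tsupport φ).indicator (fun _ ↦ L * M) x ∂vol :=
        setIntegral_le_integral integrable
          (.of_forall fun x ↦ indicator_nonneg (fun _ _ ↦ mul_nonneg hL0 hM) x)
    _ = L * M * vol.real (tsupport φ) := by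
        rw [integral_indicator_const _ hmeas, smul_eq_mul, mul_comm]

theorem IsWeakNeumannSolution.exists_measureReal_closedBall_le [FiniteDimensional ℝ E]
    [vol.IsAddHaarMeasure] [IsFiniteMeasureOnCompacts P] {a : E} {R : ℝ}
    (h : IsWeakNeumannSolution vol Ω P N u) (hu : ∀ᵐ x ∂vol.restrict Ω, ‖u x‖ ≤ M)
    (hN : N (ball a R) = 0) :
    ∃ C : ℝ, ∀ r, 0 < r → 2 * r ≤ R →
      P.real (closedBall a r) ≤ C * r ^ ((Module.finrank ℝ E : ℝ) - 1) := by
  obtain ⟨C, hC⟩ := exists_forall_norm_fderiv_contDiffBump_le (E := E) one_lt_two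
  refine ⟨C * |M| * 2 ^ Module.finrank ℝ E * vol.real (ball 0 1), fun r hr hrR ↦ ?_⟩
  let f : ContDiffBump a := ⟨r, 2 * r, hr, by linarith⟩
  have integral_N_eq_zero : ∫ x, f x ∂N = 0 := by
    refine integral_eq_zero_of_ae ?_
    filter_upwards [measure_eq_zero_iff_ae_notMem.1 hN] with x hx
    exact f.zero_of_le_dist (hrR.trans (not_lt.1 hx))
  have hf : ∀ x, ‖fderiv ℝ f x‖ ≤ C / r := hC a f (mul_div_cancel_right₀ 2 hr.ne')
  calc P.real (closedBall a r) ≤ ∫ x, f x ∂P := f.measure_closedBall_le_integral P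
    _ = -∫ x in Ω, fderiv ℝ f x (u x) ∂vol := by
        rw [h f f.contDiff f.hasCompactSupport, integral_N_eq_zero, sub_zero, neg_neg]
    _ ≤ |∫ x in Ω, fderiv ℝ f x (u x) ∂vol| := neg_le_abs _
    _ ≤ C / r * |M| * vol.real (tsupport f) :=
        abs_setIntegral_fderiv_apply_le (abs_nonneg M) (hu.mono fun _ hx ↦ hx.trans (le_abs_self M))
          f.hasCompactSupport hf
    _ = C / r * |M| * ((2 * r) ^ Module.finrank ℝ E * vol.real (ball 0 1)) := by
        rw [f.tsupport_eq, Measure.addHaar_real_closedBall vol a f.rOut_pos.le]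
    _ = C * |M| * 2 ^ Module.finrank ℝ E * vol.real (ball 0 1) *
          r ^ ((Module.finrank ℝ E : ℝ) - 1) := by
        rw [Real.rpow_sub_one hr.ne', Real.rpow_natCast, mul_pow]
        ring

theorem not_isWeakNeumannSolution_of_le_measureReal_closedBall [FiniteDimensional ℝ E]
    [vol.IsAddHaarMeasure] [IsFiniteMeasureOnCompacts P] {a : E} {c ε R : ℝ} (hc : 0 < c)
    (hε : 0 < ε) (hR : 0 < R) (hu : ∀ᵐ x ∂vol.restrict Ω, ‖u x‖ ≤ M) (hN : N (ball a R) = 0)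
    (hP : ∀ r, 0 < r → r < R →
      c * r ^ ((Module.finrank ℝ E : ℝ) - 1 - ε) ≤ P.real (closedBall a r)) :
    ¬ IsWeakNeumannSolution vol Ω P N u := by
  intro h
  obtain ⟨C, hC⟩ := h.exists_measureReal_closedBall_le hu hN
  obtain ⟨r, hr, hrR, hlt⟩ :=
    exists_mul_rpow_lt_mul_rpow_sub hc hε (half_pos hR) C ((Module.finrank ℝ E : ℝ) - 1)
  exact (((hP r hr (by linarith)).trans (hC r hr (by linarith))).trans_lt hlt).false

end WeakNeumann

lemma measure_le_of_measure_compl_eq_zero {α : Type*} [MeasurableSpace α] {μ : Measure α}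
    {t : Set α} (s : Set α) (ht : μ tᶜ = 0) : μ s ≤ μ t :=
  (measure_inter_conull ht).symm.trans_le (measure_mono inter_subset_right)

lemma toJordanDecomposition_toSignedMeasure_sub_of_mutuallySingular {α : Type*}
    [MeasurableSpace α] {P N : Measure α} [IsFiniteMeasure P] [IsFiniteMeasure N] (h : P ⟂ₘ N) :
    (P.toSignedMeasure - N.toSignedMeasure).toJordanDecomposition = ⟨P, N, h⟩ :=
  SignedMeasure.toJordanDecomposition_eq rfl

section CtrMeasure

/-- The factor `m0 / (μ0(Ω) - m0)` of `ctrMeasure`, where `m0 = μ0(B(a,r0))`, as a nonnegative real,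
so that it can multiply a positive measure. It is `0` when `μ0(Ω) ≤ m0`. -/
def outerWeight {n : ℕ} (μ0 : Measure (En n)) (Ω : Set (En n)) (a : En n) (r0 : ℝ) : ℝ≥0 :=
  (μ0.real (ball a r0) / (μ0.real Ω - μ0.real (ball a r0))).toNNReal

variable {n : ℕ} {μ0 : Measure (En n)} [IsFiniteMeasure μ0] {Ω : Set (En n)} {a : En n} {r0 : ℝ}

lemma ctrMeasure_apply {s : Set (En n)} (hs : MeasurableSet s) :
    ctrMeasure μ0 Ω a r0 s = μ0.real (s ∩ ball a r0) -
      μ0.real (ball a r0) / (μ0.real Ω - μ0.real (ball a r0)) * μ0.real (s ∩ (Ω \ ball a r0)) := by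
  rw [ctrMeasure, sub_apply, smul_apply, smul_eq_mul,
    Measure.toSignedMeasure_apply_measurable hs, Measure.toSignedMeasure_apply_measurable hs,
    measureReal_restrict_apply hs, measureReal_restrict_apply hs]
  rfl

lemma ctrMeasure_apply_self (hΩ : MeasurableSet Ω) (hsupp : μ0 Ωᶜ = 0)
    (hlt : μ0 (ball a r0) < μ0 Ω) : ctrMeasure μ0 Ω a r0 Ω = 0 := by
  have inner : μ0.real (Ω ∩ ball a r0) = μ0.real (ball a r0) := by
    rw [measureReal_def, inter_comm, measure_inter_conull hsupp, measureReal_def]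
  have outer : μ0.real (Ω \ ball a r0) = μ0.real Ω - μ0.real (ball a r0) := by
    rw [← measureReal_inter_add_sdiff (s := Ω) (measurableSet_ball (x := a) (ε := r0)), inner,
      add_sub_cancel_left]
  have hne : μ0.real Ω - μ0.real (ball a r0) ≠ 0 :=
    sub_ne_zero.2 (ENNReal.toReal_strict_mono (measure_ne_top _ _) hlt).ne'
  rw [ctrMeasure_apply hΩ, inner, inter_eq_self_of_subset_right sdiff_subset, outer,
    div_mul_cancel₀ _ hne, sub_self]

lemma ctrMeasure_apply_of_subset_ball {s : Set (En n)} (hs : MeasurableSet s)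
    (hsub : s ⊆ ball a r0) : ctrMeasure μ0 Ω a r0 s = μ0.real s := by
  rw [ctrMeasure_apply hs, inter_eq_self_of_subset_left hsub,
    (disjoint_sdiff_right.mono_left hsub).inter_eq, measureReal_empty, mul_zero, sub_zero]

lemma outerWeight_le_one (hhalf : μ0 (ball a r0) ≤ μ0 Ω / 2) : outerWeight μ0 Ω a r0 ≤ 1 := by
  have hhalf' : μ0.real (ball a r0) ≤ μ0.real Ω / 2 := by
    simpa [measureReal_def] using ENNReal.toReal_mono (by finiteness) hhalf
  have hΩ0 : 0 ≤ μ0.real Ω := measureReal_nonneg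
  exact Real.toNNReal_le_one.2 (div_le_one_of_le₀ (by linarith) (by linarith))

lemma ctrMeasure_toJordanDecomposition (hle : μ0 (ball a r0) ≤ μ0 Ω) :
    (ctrMeasure μ0 Ω a r0).toJordanDecomposition.posPart = μ0.restrict (ball a r0) ∧
      (ctrMeasure μ0 Ω a r0).toJordanDecomposition.negPart =
        outerWeight μ0 Ω a r0 • μ0.restrict (Ω \ ball a r0) := by
  have singular : μ0.restrict (ball a r0) ⟂ₘ
      outerWeight μ0 Ω a r0 • μ0.restrict (Ω \ ball a r0) :=
    ⟨(ball a r0)ᶜ, measurableSet_ball.compl,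
      by simp [Measure.restrict_apply measurableSet_ball.compl],
      by simp [Measure.restrict_apply measurableSet_ball]⟩
  have eq_sub : ctrMeasure μ0 Ω a r0 = (μ0.restrict (ball a r0)).toSignedMeasure -
      (outerWeight μ0 Ω a r0 • μ0.restrict (Ω \ ball a r0)).toSignedMeasure := by
    have hweight : (outerWeight μ0 Ω a r0 : ℝ) =
        μ0.real (ball a r0) / (μ0.real Ω - μ0.real (ball a r0)) :=
      Real.coe_toNNReal _ (div_nonneg measureReal_nonneg
        (sub_nonneg.2 (ENNReal.toReal_mono (measure_ne_top _ _) hle)))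
    rw [Measure.toSignedMeasure_smul, NNReal.smul_def, hweight]
    rfl
  rw [eq_sub, toJordanDecomposition_toSignedMeasure_sub_of_mutuallySingular singular]
  exact ⟨rfl, rfl⟩

lemma ctrMeasure_totalVariation_le (hhalf : μ0 (ball a r0) ≤ μ0 Ω / 2) :
    (ctrMeasure μ0 Ω a r0).totalVariation ≤ μ0 := by
  obtain ⟨hpos, hneg⟩ := ctrMeasure_toJordanDecomposition (hhalf.trans ENNReal.half_le_self)
  calc (ctrMeasure μ0 Ω a r0).totalVariation
      = μ0.restrict (ball a r0) + outerWeight μ0 Ω a r0 • μ0.restrict (Ω \ ball a r0) := by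
        rw [SignedMeasure.totalVariation, hpos, hneg]
    _ ≤ μ0.restrict (ball a r0) + (1 : ℝ≥0) • μ0.restrict (ball a r0)ᶜ := by
        gcongr
        · exact outerWeight_le_one hhalf
        · exact sdiff_subset_compl _ _
    _ = μ0 := by rw [one_smul, Measure.restrict_add_restrict_compl measurableSet_ball]

lemma ctrMeasure_posPart_restrict (hsupp : μ0 Ωᶜ = 0) :
    (ctrMeasure μ0 Ω a r0).toJordanDecomposition.posPart.restrict Ω = μ0.restrict (ball a r0) := by
  rw [(ctrMeasure_toJordanDecomposition (measure_le_of_measure_compl_eq_zero _ hsupp)).1]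
  exact Measure.restrict_eq_self_of_ae_mem (ae_restrict_of_ae hsupp)

lemma ctrMeasure_negPart_ball (hle : μ0 (ball a r0) ≤ μ0 Ω) :
    (ctrMeasure μ0 Ω a r0).toJordanDecomposition.negPart (ball a r0) = 0 := by
  rw [(ctrMeasure_toJordanDecomposition hle).2]
  simp [Measure.restrict_apply measurableSet_ball]

lemma not_isWeakNeumannSolution_ctrMeasure {c ε M : ℝ} (hc : 0 < c) (hε : 0 < ε) (hr0 : 0 < r0)
    (hsupp : μ0 Ωᶜ = 0)
    (hgrowth : ∀ r : ℝ, 0 < r → r < r0 → c * r ^ ((n : ℝ) - 1 - ε) ≤ μ0.real (ball a r))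
    {u : En n → En n} (hu : ∀ᵐ x ∂volume.restrict Ω, ‖u x‖ ≤ M) :
    ¬ IsWeakNeumannSolution volume Ω
      ((ctrMeasure μ0 Ω a r0).toJordanDecomposition.posPart.restrict Ω)
      ((ctrMeasure μ0 Ω a r0).toJordanDecomposition.negPart.restrict Ω) u := by
  rw [ctrMeasure_posPart_restrict hsupp]
  refine not_isWeakNeumannSolution_of_le_measureReal_closedBall (a := a) hc hε hr0 hu ?_ ?_
  · exact Measure.absolutelyContinuous_of_le Measure.restrict_le_self
      (ctrMeasure_negPart_ball (measure_le_of_measure_compl_eq_zero _ hsupp))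
  · intro r hr hrr0
    rw [finrank_euclideanSpace_fin, measureReal_restrict_apply measurableSet_closedBall,
      inter_eq_self_of_subset_left (closedBall_subset_ball hrr0)]
    exact (hgrowth r hr hrr0).trans (measureReal_mono ball_subset_closedBall)

end CtrMeasure

theorem stmt_12_general (n : ℕ) (Ω : Set (En n)) (hΩ : MeasurableSet Ω) (a : En n)
    (ε c r0 : ℝ) (hε0 : 0 < ε) (hc : 0 < c) (hr0 : 0 < r0)
    (μ0 : Measure (En n)) [IsFiniteMeasure μ0] (hμ0supp : μ0 Ωᶜ = 0)
    (hgrowth : ∀ r : ℝ, 0 < r → r < r0 →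
      ENNReal.ofReal (c * r ^ ((n : ℝ) - 1 - ε)) ≤ μ0 (ball a r))
    (hm0half : μ0 (ball a r0) < μ0 Ω / 2) :
    ctrMeasure μ0 Ω a r0 Ω = 0 ∧
    (ctrMeasure μ0 Ω a r0).totalVariation ≤ μ0 ∧
    (∀ r : ℝ, 0 < r → r < r0 →
      c * r ^ ((n : ℝ) - 1 - ε) ≤ ctrMeasure μ0 Ω a r0 (ball a r)) ∧
    ¬ ∃ u : En n → En n, Measurable u ∧
        (∃ M : ℝ, ∀ᵐ x ∂volume.restrict Ω, ‖u x‖ ≤ M) ∧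
        ∀ φ : En n → ℝ, ContDiff ℝ (⊤ : ℕ∞) φ → HasCompactSupport φ →
          ∫ x in Ω, ⟪u x, gradient φ x⟫ = - signedIntegral (ctrMeasure μ0 Ω a r0) Ω φ := by
  have hgrowth_real : ∀ r : ℝ, 0 < r → r < r0 →
      c * r ^ ((n : ℝ) - 1 - ε) ≤ μ0.real (ball a r) := fun r hr hrr0 ↦
    (ENNReal.ofReal_le_iff_le_toReal (measure_ne_top _ _)).1 (hgrowth r hr hrr0)
  refine ⟨ctrMeasure_apply_self hΩ hμ0supp (hm0half.trans_le ENNReal.half_le_self),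
    ctrMeasure_totalVariation_le hm0half.le, fun r hr hrr0 ↦ ?_, ?_⟩
  · rw [ctrMeasure_apply_of_subset_ball measurableSet_ball (ball_subset_ball hrr0.le)]
    exact hgrowth_real r hr hrr0
  · rintro ⟨u, -, ⟨M, hM⟩, hu⟩
    refine not_isWeakNeumannSolution_ctrMeasure hc hε0 hr0 hμ0supp hgrowth_real hM
      fun φ hφ hφsupp ↦ ?_
    simpa only [inner_gradient_right, conj_trivial, signedIntegral] using hu φ hφ hφsupp

/-- (Remark 1.1 (ii).) Let `Ω ⊆ ℝⁿ` (`n ≥ 2`) be a bounded domain,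
`a ∈ Ω`, `0 < ε < n−1`, `c > 0`, `r0 > 0`, and let `μ0` be a finite positive Radon
measure on `Ω` with `μ0({a}) = 0`, `μ0(B(a,r)) ≥ c r^{n−1−ε}` for `0 < r < r0`, and
`0 < m0 := μ0(B(a,r0)) < μ0(Ω)/2`. Then the signed measure
`μ := μ0⌞B(a,r0) − (m0/(μ0(Ω)−m0)) μ0⌞(Ω \ B(a,r0))` satisfies `μ(Ω) = 0`, `|μ| ≤ μ0`,
`μ(B(a,r)) ≥ c r^{n−1−ε}` for `0 < r < r0`, and there is no essentially bounded
measurable vector field `u` solving `∫_Ω u·∇φ = −∫_Ω φ dμ` for all compactly supported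
smooth `φ`. -/
theorem stmt_12 (n : ℕ) (hn : 2 ≤ n) (Ω : Set (En n))
    (hΩopen : IsOpen Ω) (hΩconn : IsConnected Ω) (hΩbdd : Bornology.IsBounded Ω)
    (a : En n) (ha : a ∈ Ω) (ε c r0 : ℝ)
    (hε0 : 0 < ε) (hε1 : ε < (n : ℝ) - 1) (hc : 0 < c) (hr0 : 0 < r0)
    (μ0 : Measure (En n)) [IsFiniteMeasure μ0] (hμ0supp : μ0 Ωᶜ = 0)
    (hatom : μ0 {a} = 0)
    (hgrowth : ∀ r : ℝ, 0 < r → r < r0 →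
      ENNReal.ofReal (c * r ^ ((n : ℝ) - 1 - ε)) ≤ μ0 (Metric.ball a r))
    (hm0pos : 0 < μ0 (Metric.ball a r0))
    (hm0half : μ0 (Metric.ball a r0) < μ0 Ω / 2) :
    ctrMeasure μ0 Ω a r0 Ω = 0 ∧
    (ctrMeasure μ0 Ω a r0).totalVariation ≤ μ0 ∧
    (∀ r : ℝ, 0 < r → r < r0 →
      c * r ^ ((n : ℝ) - 1 - ε) ≤ ctrMeasure μ0 Ω a r0 (Metric.ball a r)) ∧
    ¬ ∃ u : En n → En n, Measurable u ∧
        (∃ M : ℝ, ∀ᵐ x ∂volume.restrict Ω, ‖u x‖ ≤ M) ∧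
        ∀ φ : En n → ℝ, ContDiff ℝ (⊤ : ℕ∞) φ → HasCompactSupport φ →
          ∫ x in Ω, ⟪u x, gradient φ x⟫ = - signedIntegral (ctrMeasure μ0 Ω a r0) Ω φ := by
  exact stmt_12_general n Ω hΩopen.measurableSet a ε c r0 hε0 hc hr0 μ0 hμ0supp hgrowth hm0half
end
end

section
/- Let 0 < ε < 1/2, let (h_k)_{k∈ℕ} ⊂ (0,1) be a strictly decreasing sequence with limit 0, and for k ∈ ℕ set L_k := [0, 1−ε] × {h_k} if k is even and L_k := [ε, 1] × {h_k} if k is odd. Let Ω := (0,1)² \ ⋃_{k∈ℕ} L_k, and fix a point (x0,y0) ∈ Ω with y0 > h_0. If Σ_{k∈ℕ} k (h_k − h_{k+1}) < +∞, then the geodesic distance d_Ω to (x0,y0) in Ω (the infimum of lengths of rectifiable curves joining a point to (x0,y0) inside Ω) is integrable on Ω with respect to the two-dimensional Lebesgue measure. -/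
open MeasureTheory Metric Set
open scoped RealInnerProductSpace ENNReal NNReal

noncomputable section

/-!
A point of height in `(h (k + 1), h k]` reaches the region above slit `k` by moving horizontally to
the abscissa of a gap of slit `k` and then vertically through that gap; each move costs at most `2`.
Hence points in this strip have geodesic distance at most `4 * (k + 2)` from the base point, and
since the strip has area `h k - h (k + 1)`, the integral is controlled by `∑ k (h k - h (k + 1))`.
-/

section GeodesicDistance

variable {X : Type*}

/-- Concatenation of two curves parametrized by `[0, 1]`, each run at double speed. It is meant for
`γ₁ 1 = γ₂ 0`; the value at `1 / 2` is taken from `γ₁`. -/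
def curveConcat (γ₁ γ₂ : ℝ → X) (t : ℝ) : X :=
  if t ≤ 1 / 2 then γ₁ (2 * t) else γ₂ (2 * t - 1)

theorem curveConcat_eqOn_left (γ₁ γ₂ : ℝ → X) :
    EqOn (curveConcat γ₁ γ₂) (γ₁ ∘ fun t => 2 * t) (Icc 0 (1 / 2)) :=
  fun _ ht => if_pos ht.2

theorem curveConcat_eqOn_right {γ₁ γ₂ : ℝ → X} (hγ : γ₁ 1 = γ₂ 0) :
    EqOn (curveConcat γ₁ γ₂) (γ₂ ∘ fun t => 2 * t - 1) (Icc (1 / 2) 1) := by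
  intro t ht
  rcases ht.1.eq_or_lt with rfl | hlt
  · simp [curveConcat, hγ]
  · exact if_neg hlt.not_ge

theorem mapsTo_two_mul_Icc : MapsTo (fun t : ℝ => 2 * t) (Icc 0 (1 / 2)) (Icc 0 1) :=
  fun t ht => ⟨by linarith [ht.1], by linarith [ht.2]⟩

theorem mapsTo_two_mul_sub_one_Icc :
    MapsTo (fun t : ℝ => 2 * t - 1) (Icc (1 / 2) 1) (Icc 0 1) :=
  fun t ht => ⟨by linarith [ht.1], by linarith [ht.2]⟩

theorem Icc_zero_half_union_Icc_half_one : Icc (0 : ℝ) (1 / 2) ∪ Icc (1 / 2) 1 = Icc 0 1 :=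
  Icc_union_Icc_eq_Icc (by norm_num) (by norm_num)

theorem mapsTo_curveConcat {γ₁ γ₂ : ℝ → X} {U : Set X} (h₁ : MapsTo γ₁ (Icc 0 1) U)
    (h₂ : MapsTo γ₂ (Icc 0 1) U) (hγ : γ₁ 1 = γ₂ 0) :
    MapsTo (curveConcat γ₁ γ₂) (Icc 0 1) U := by
  rw [← Icc_zero_half_union_Icc_half_one]
  exact ((h₁.comp mapsTo_two_mul_Icc).congr (curveConcat_eqOn_left γ₁ γ₂).symm).union
    ((h₂.comp mapsTo_two_mul_sub_one_Icc).congr (curveConcat_eqOn_right hγ).symm)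

theorem continuousOn_curveConcat [TopologicalSpace X] {γ₁ γ₂ : ℝ → X}
    (h₁ : ContinuousOn γ₁ (Icc 0 1)) (h₂ : ContinuousOn γ₂ (Icc 0 1)) (hγ : γ₁ 1 = γ₂ 0) :
    ContinuousOn (curveConcat γ₁ γ₂) (Icc 0 1) := by
  rw [← Icc_zero_half_union_Icc_half_one]
  refine ContinuousOn.union_of_isClosed ?_ ?_ isClosed_Icc isClosed_Icc
  · exact (h₁.comp (by fun_prop) mapsTo_two_mul_Icc).congr (curveConcat_eqOn_left γ₁ γ₂)
  · exact (h₂.comp (by fun_prop) mapsTo_two_mul_sub_one_Icc).congr (curveConcat_eqOn_right hγ)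

variable [PseudoEMetricSpace X] {U : Set X}

theorem eVariationOn_curveConcat_le {γ₁ γ₂ : ℝ → X} (hγ : γ₁ 1 = γ₂ 0) :
    eVariationOn (curveConcat γ₁ γ₂) (Icc 0 1) ≤
      eVariationOn γ₁ (Icc 0 1) + eVariationOn γ₂ (Icc 0 1) := by
  have hsplit : eVariationOn (curveConcat γ₁ γ₂) (Icc 0 1) =
      eVariationOn (curveConcat γ₁ γ₂) (Icc 0 (1 / 2)) +
        eVariationOn (curveConcat γ₁ γ₂) (Icc (1 / 2) 1) := by
    rw [← Icc_zero_half_union_Icc_half_one]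
    exact eVariationOn.union _ (isGreatest_Icc (by norm_num)) (isLeast_Icc (by norm_num))
  rw [hsplit, eVariationOn.eq_of_eqOn (curveConcat_eqOn_left γ₁ γ₂),
    eVariationOn.eq_of_eqOn (curveConcat_eqOn_right hγ)]
  gcongr
  · exact eVariationOn.comp_le_of_monotoneOn γ₁ _ (fun s _ t _ hst => by linarith)
      mapsTo_two_mul_Icc
  · exact eVariationOn.comp_le_of_monotoneOn γ₂ _ (fun s _ t _ hst => by linarith)
      mapsTo_two_mul_sub_one_Icc

theorem geoDist_le_eVariationOn {γ : ℝ → X} (hcont : ContinuousOn γ (Icc 0 1))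
    (hmaps : MapsTo γ (Icc 0 1) U) :
    geoDist U (γ 1) (γ 0) ≤ eVariationOn γ (Icc 0 1) :=
  iInf_le_of_le γ <| iInf_le_of_le hcont <| iInf_le_of_le hmaps <|
    iInf_le_of_le rfl <| iInf_le_of_le rfl le_rfl

theorem geoDist_triangle (U : Set X) (x y z : X) :
    geoDist U z x ≤ geoDist U y x + geoDist U z y := by
  conv_rhs => unfold geoDist
  simp only [ENNReal.iInf_add, ENNReal.add_iInf, le_iInf_iff]
  rintro γ₂ hc₂ hm₂ hγ rfl γ₁ hc₁ hm₁ rfl rfl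
  have hconcat := geoDist_le_eVariationOn (continuousOn_curveConcat hc₁ hc₂ hγ.symm)
    (mapsTo_curveConcat hm₁ hm₂ hγ.symm)
  have hsource : curveConcat γ₁ γ₂ 0 = γ₁ 0 := by simp [curveConcat]
  have htarget : curveConcat γ₁ γ₂ 1 = γ₂ 1 := by norm_num [curveConcat]
  rw [hsource, htarget] at hconcat
  exact hconcat.trans (eVariationOn_curveConcat_le hγ.symm)

end GeodesicDistance

section NormedSpace

variable {E : Type*} [SeminormedAddCommGroup E] [NormedSpace ℝ E]

theorem eVariationOn_lineMap_Icc_le (p q : E) :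
    eVariationOn (AffineMap.lineMap p q : ℝ → E) (Icc 0 1) ≤ edist p q := by
  have hlip := (lipschitzWith_lineMap (𝕜 := ℝ) p q).lipschitzOnWith (s := univ)
    |>.comp_eVariationOn_le (g := id) (s := Icc (0 : ℝ) 1) (mapsTo_univ _ _)
  simpa only [Function.comp_id, eVariationOn_id_Icc, sub_zero, ENNReal.ofReal_one, mul_one,
    edist_nndist] using hlip

theorem geoDist_le_edist_of_convex {C U : Set E} (hC : Convex ℝ C) (hCU : C ⊆ U) {p q : E}
    (hp : p ∈ C) (hq : q ∈ C) : geoDist U q p ≤ edist p q := by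
  have hcurve := geoDist_le_eVariationOn (U := U) (γ := AffineMap.lineMap (k := ℝ) p q)
    (lipschitzWith_lineMap p q).continuous.continuousOn
    fun t ht => hCU (hC.lineMap_mem hp hq ht)
  rw [AffineMap.lineMap_apply_zero, AffineMap.lineMap_apply_one] at hcurve
  exact hcurve.trans (eVariationOn_lineMap_Icc_le p q)

end NormedSpace

theorem summable_of_summable_natCast_mul {d : ℕ → ℝ} (hd : Summable fun k : ℕ => (k : ℝ) * d k) :
    Summable d := by
  refine Summable.of_norm_bounded_eventually_nat hd.norm ?_
  filter_upwards [Filter.eventually_ge_atTop 1] with k hk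
  rw [norm_mul, RCLike.norm_natCast]
  exact le_mul_of_one_le_left (norm_nonneg _) (by exact_mod_cast hk)

theorem setLIntegral_iUnion_le_tsum_mul {α ι : Type*} [MeasurableSpace α] {μ : Measure α}
    [Countable ι] {f : α → ℝ≥0∞} {s : ι → Set α} {c : ι → ℝ≥0∞}
    (hf : ∀ i, ∀ x ∈ s i, f x ≤ c i) :
    ∫⁻ x in ⋃ i, s i, f x ∂μ ≤ ∑' i, c i * μ (s i) := by
  refine (lintegral_iUnion_le s f).trans (ENNReal.tsum_le_tsum fun i => ?_)
  exact (setLIntegral_mono measurable_const (hf i)).trans_eq (setLIntegral_const _ _)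

section Rectangle

/-- The product `s × t` as a subset of the Euclidean plane. -/
def rectangle (s t : Set ℝ) : Set (En 2) := {p | p 0 ∈ s ∧ p 1 ∈ t}

/-- The open unit square `(0, 1)²`. -/
def unitSquare : Set (En 2) := rectangle (Ioo 0 1) (Ioo 0 1)

theorem rectangle_mono {s s' t t' : Set ℝ} (hs : s ⊆ s') (ht : t ⊆ t') :
    rectangle s t ⊆ rectangle s' t' :=
  fun _ hp => ⟨hs hp.1, ht hp.2⟩

theorem convex_rectangle {s t : Set ℝ} (hs : Convex ℝ s) (ht : Convex ℝ t) :
    Convex ℝ (rectangle s t) :=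
  fun _ hp _ hq _ _ ha hb hab => ⟨hs hp.1 hq.1 ha hb hab, ht hp.2 hq.2 ha hb hab⟩

theorem volume_rectangle (s t : Set ℝ) : volume (rectangle s t) = volume s * volume t := by
  have hpi := (EuclideanSpace.volume_preserving_symm_measurableEquiv_toLp
    (Fin 2)).measure_preimage_equiv (Set.pi univ ![s, t])
  simp only [volume_pi_pi, Fin.prod_univ_two, Matrix.cons_val_zero, Matrix.cons_val_one] at hpi
  rw [← hpi]
  congr 1
  ext p
  simp [rectangle, Set.mem_pi, Fin.forall_fin_two]

theorem edist_le_two_of_mem_unitSquare {p q : En 2} (hp : p ∈ unitSquare) (hq : q ∈ unitSquare) :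
    edist p q ≤ 2 := by
  obtain ⟨⟨hp0, hp0'⟩, hp1, hp1'⟩ := hp
  obtain ⟨⟨hq0, hq0'⟩, hq1, hq1'⟩ := hq
  rw [edist_dist, EuclideanSpace.dist_eq]
  refine ENNReal.ofReal_le_of_le_toReal (Real.sqrt_le_iff.2 ⟨by norm_num, ?_⟩)
  simp only [Fin.sum_univ_two, Real.dist_eq, sq_abs, ENNReal.toReal_ofNat]
  nlinarith

end Rectangle

section Slits

/-- The height bounding from above the `k`-th corridor, whose lower bound is `h k`: the side of the
square for `k = 0`, and the slit `k - 1` otherwise. -/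
def ceiling (h : ℕ → ℝ) : ℕ → ℝ
  | 0 => 1
  | k + 1 => h k

/-- The open rectangle between the slit `k` and the obstacle just above it. -/
def corridor (h : ℕ → ℝ) (k : ℕ) : Set (En 2) := rectangle (Ioo 0 1) (Ioo (h k) (ceiling h k))

/-- The corridor `k` together with the slit above it, so that the strips cover the unit square. -/
def strip (h : ℕ → ℝ) (k : ℕ) : Set (En 2) := rectangle (Ioo 0 1) (Ioc (h k) (ceiling h k))

/-- The vertical segment of abscissa `x` which crosses the slit `k` and no other slit. -/
def shaft (h : ℕ → ℝ) (k : ℕ) (x : ℝ) : Set (En 2) :=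
  rectangle {x} (Ioo (h (k + 1)) (ceiling h k))

/-- The unit square with the sets `L k` removed. -/
def slitSquare (L : ℕ → Set (En 2)) : Set (En 2) := unitSquare \ ⋃ k, L k

variable {h : ℕ → ℝ} {L : ℕ → Set (En 2)}

theorem mem_slitSquare {p : En 2} : p ∈ slitSquare L ↔ p ∈ unitSquare ∧ ∀ k, p ∉ L k := by
  simp [slitSquare]

theorem convex_corridor (h : ℕ → ℝ) (k : ℕ) : Convex ℝ (corridor h k) :=
  convex_rectangle (convex_Ioo _ _) (convex_Ioo _ _)

theorem convex_shaft (h : ℕ → ℝ) (k : ℕ) (x : ℝ) : Convex ℝ (shaft h k x) :=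
  convex_rectangle (convex_singleton x) (convex_Ioo _ _)

theorem volume_strip (h : ℕ → ℝ) (k : ℕ) :
    volume (strip h k) = ENNReal.ofReal (ceiling h k - h k) := by
  simp [strip, volume_rectangle]

theorem lt_ceiling (hh : StrictAnti h) (h0 : h 0 < 1) : ∀ k, h k < ceiling h k
  | 0 => h0
  | k + 1 => hh k.lt_succ_self

theorem ceiling_le_one (hh : StrictAnti h) (h0 : h 0 < 1) : ∀ k, ceiling h k ≤ 1
  | 0 => le_rfl
  | k + 1 => (hh.antitone k.zero_le).trans h0.le

theorem le_of_lt_ceiling (hh : StrictAnti h) {j : ℕ} : ∀ {k : ℕ}, h j < ceiling h k → k ≤ j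
  | 0, _ => j.zero_le
  | _ + 1, hjk => hh.lt_iff_gt.1 hjk

theorem exists_mem_Ioc_ceiling {y : ℝ} (hy : y ≤ 1) (hex : ∃ k, h k < y) :
    ∃ k, y ∈ Ioc (h k) (ceiling h k) := by
  classical
  refine ⟨Nat.find hex, Nat.find_spec hex, ?_⟩
  rcases hn : Nat.find hex with _ | n
  · exact hy
  · exact not_lt.1 (Nat.find_min hex (hn ▸ n.lt_succ_self))

theorem Ioo_ceiling_subset (hh : StrictAnti h) (hpos : ∀ k, 0 < h k) (h0 : h 0 < 1) (j k : ℕ) :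
    Ioo (h j) (ceiling h k) ⊆ Ioo 0 1 :=
  Ioo_subset_Ioo (hpos j).le (ceiling_le_one hh h0 k)

theorem corridor_subset_slitSquare (hh : StrictAnti h) (hpos : ∀ k, 0 < h k) (h0 : h 0 < 1)
    (hL : ∀ k, ∀ p ∈ L k, p 1 = h k) (k : ℕ) : corridor h k ⊆ slitSquare L := by
  refine fun p hp => mem_slitSquare.2
    ⟨rectangle_mono Subset.rfl (Ioo_ceiling_subset hh hpos h0 k k) hp, fun j hj => ?_⟩
  have hheight := hp.2
  rw [hL j p hj] at hheight
  exact (hh.lt_iff_gt.1 hheight.1).not_ge (le_of_lt_ceiling hh hheight.2)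

theorem shaft_subset_slitSquare (hh : StrictAnti h) (hpos : ∀ k, 0 < h k) (h0 : h 0 < 1)
    (hL : ∀ k, ∀ p ∈ L k, p 1 = h k) {k : ℕ} {x : ℝ} (hx : x ∈ Ioo (0 : ℝ) 1)
    (hxL : !₂[x, h k] ∉ L k) : shaft h k x ⊆ slitSquare L := by
  refine fun p hp => mem_slitSquare.2 ⟨rectangle_mono (singleton_subset_iff.2 hx)
    (Ioo_ceiling_subset hh hpos h0 (k + 1) k) hp, fun j hj => hxL ?_⟩
  have hheight := hp.2
  rw [hL j p hj] at hheight
  obtain rfl : j = k := le_antisymm (Nat.lt_succ_iff.1 (hh.lt_iff_gt.1 hheight.1))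
    (le_of_lt_ceiling hh hheight.2)
  have hp_eq : p = !₂[x, h j] := by
    ext i
    fin_cases i
    exacts [hp.1, hL j p hj]
  exact hp_eq ▸ hj

theorem geoDist_slitSquare_le_two_of_convex {C : Set (En 2)} (hC : Convex ℝ C)
    (hCL : C ⊆ slitSquare L) {p q : En 2} (hp : p ∈ C) (hq : q ∈ C) :
    geoDist (slitSquare L) q p ≤ 2 :=
  (geoDist_le_edist_of_convex hC hCL hp hq).trans
    (edist_le_two_of_mem_unitSquare (hCL hp).1 (hCL hq).1)

theorem exists_above_slit_of_mem_shaft (hh : StrictAnti h) (hpos : ∀ k, 0 < h k) (h0 : h 0 < 1)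
    (hL : ∀ k, ∀ p ∈ L k, p 1 = h k) {k : ℕ} {x : ℝ} (hx : x ∈ Ioo (0 : ℝ) 1)
    (hxL : !₂[x, h k] ∉ L k) {p : En 2} (hp : p ∈ shaft h k x) :
    ∃ r ∈ slitSquare L, h k < r 1 ∧ geoDist (slitSquare L) r p ≤ 2 := by
  have hshaft := shaft_subset_slitSquare hh hpos h0 hL hx hxL
  obtain ⟨y, hky, hyk⟩ := exists_between (lt_ceiling hh h0 k)
  have hr : !₂[x, y] ∈ shaft h k x := ⟨rfl, (hh k.lt_succ_self).trans hky, hyk⟩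
  exact ⟨_, hshaft hr, hky,
    geoDist_slitSquare_le_two_of_convex (convex_shaft h k x) hshaft hp hr⟩

theorem exists_above_slit_geoDist_le_four (hh : StrictAnti h) (hpos : ∀ k, 0 < h k)
    (h0 : h 0 < 1) (hL : ∀ k, ∀ p ∈ L k, p 1 = h k) {k : ℕ}
    (hgap : ∃ x ∈ Ioo (0 : ℝ) 1, !₂[x, h k] ∉ L k) {p : En 2} (hp : p ∈ slitSquare L)
    (hpk : p 1 ∈ Ioc (h (k + 1)) (h k)) :
    ∃ r ∈ slitSquare L, h k < r 1 ∧ geoDist (slitSquare L) r p ≤ 4 := by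
  have hceil := lt_ceiling hh h0 k
  rcases hpk.2.eq_or_lt with hon | hbelow
  · have hpL : !₂[p 0, h k] ∉ L k := by
      have hp_eq : !₂[p 0, h k] = p := by
        ext i
        fin_cases i
        exacts [rfl, hon.symm]
      exact hp_eq ▸ (mem_slitSquare.1 hp).2 k
    obtain ⟨r, hr, hkr, hdist⟩ := exists_above_slit_of_mem_shaft hh hpos h0 hL hp.1.1 hpL
      ⟨rfl, hpk.1, hon.trans_lt hceil⟩
    exact ⟨r, hr, hkr, hdist.trans (by norm_num)⟩
  · obtain ⟨x, hx, hxL⟩ := hgap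
    have hpcorr : p ∈ corridor h (k + 1) := ⟨hp.1.1, hpk.1, hbelow⟩
    have hqcorr : !₂[x, p 1] ∈ corridor h (k + 1) := ⟨hx, hpk.1, hbelow⟩
    have hqshaft : !₂[x, p 1] ∈ shaft h k x := ⟨rfl, hpk.1, hbelow.trans hceil⟩
    have hhoriz := geoDist_slitSquare_le_two_of_convex (convex_corridor h (k + 1))
      (corridor_subset_slitSquare hh hpos h0 hL (k + 1)) hpcorr hqcorr
    obtain ⟨r, hr, hkr, hvert⟩ := exists_above_slit_of_mem_shaft hh hpos h0 hL hx hxL hqshaft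
    refine ⟨r, hr, hkr, (geoDist_triangle _ p !₂[x, p 1] r).trans ?_⟩
    exact (add_le_add hhoriz hvert).trans (by norm_num)

theorem geoDist_slitSquare_le (hh : StrictAnti h) (hpos : ∀ k, 0 < h k) (h0 : h 0 < 1)
    (hL : ∀ k, ∀ p ∈ L k, p 1 = h k) (hgap : ∀ k, ∃ x ∈ Ioo (0 : ℝ) 1, !₂[x, h k] ∉ L k)
    {z : En 2} (hz : z ∈ slitSquare L) (hz0 : h 0 < z 1) (k : ℕ) {p : En 2}
    (hp : p ∈ slitSquare L) (hpk : h k < p 1) :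
    geoDist (slitSquare L) z p ≤ (4 * (k + 1) : ℕ) := by
  induction k generalizing p with
  | zero =>
    have htop := geoDist_slitSquare_le_two_of_convex (convex_corridor h 0)
      (corridor_subset_slitSquare hh hpos h0 hL 0)
      (p := p) (q := z) ⟨hp.1.1, hpk, hp.1.2.2⟩ ⟨hz.1.1, hz0, hz.1.2.2⟩
    exact htop.trans (by norm_num)
  | succ k ih =>
    rcases lt_or_ge (h k) (p 1) with habove | hbelow
    · exact (ih hp habove).trans (by gcongr; exact k.le_succ)
    · obtain ⟨r, hr, hkr, hpr⟩ :=
        exists_above_slit_geoDist_le_four hh hpos h0 hL (hgap k) hp ⟨hpk, hbelow⟩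
      calc geoDist (slitSquare L) z p
          ≤ geoDist (slitSquare L) r p + geoDist (slitSquare L) z r := geoDist_triangle _ p r z
        _ ≤ 4 + (4 * (k + 1) : ℕ) := add_le_add hpr (ih hr hkr)
        _ = (4 * (k + 1 + 1) : ℕ) := by push_cast; ring

theorem slitSquare_subset_iUnion_strip (hlim : Filter.Tendsto h Filter.atTop (nhds 0)) :
    slitSquare L ⊆ ⋃ k, slitSquare L ∩ strip h k := by
  intro p hp
  obtain ⟨hp0, hp1⟩ := hp.1
  obtain ⟨k, hk⟩ := exists_mem_Ioc_ceiling hp1.2.le (hlim.eventually_lt_const hp1.1).exists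
  exact mem_iUnion.2 ⟨k, hp, hp0, hk⟩

theorem summable_succ_mul_ceiling_sub
    (hsum : Summable fun k : ℕ => (k : ℝ) * (h k - h (k + 1))) :
    Summable fun k : ℕ => ((4 * (k + 1) : ℕ) : ℝ) * (ceiling h k - h k) := by
  rw [← summable_nat_add_iff 1]
  refine ((hsum.mul_left 4).add
    ((summable_of_summable_natCast_mul hsum).mul_left 8)).congr fun k => ?_
  simp only [ceiling]
  push_cast
  ring

theorem stmt_17_general (hh : StrictAnti h) (hlim : Filter.Tendsto h Filter.atTop (nhds 0))
    (hsum : Summable fun k : ℕ => (k : ℝ) * (h k - h (k + 1)))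
    (hL : ∀ k, ∀ p ∈ L k, p 1 = h k) (hgap : ∀ k, ∃ x ∈ Ioo (0 : ℝ) 1, !₂[x, h k] ∉ L k)
    {z : En 2} (hz : z ∈ slitSquare L) (hz0 : h 0 < z 1) :
    ∫⁻ p in slitSquare L, geoDist (slitSquare L) z p < ⊤ := by
  have hpos : ∀ k, 0 < h k := fun k =>
    (hh.antitone.le_of_tendsto hlim (k + 1)).trans_lt (hh k.lt_succ_self)
  have h0 : h 0 < 1 := hz0.trans hz.1.2.2
  calc ∫⁻ p in slitSquare L, geoDist (slitSquare L) z p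
      ≤ ∫⁻ p in ⋃ k, slitSquare L ∩ strip h k, geoDist (slitSquare L) z p :=
        lintegral_mono_set (slitSquare_subset_iUnion_strip hlim)
    _ ≤ ∑' k : ℕ, ((4 * (k + 1) : ℕ) : ℝ≥0∞) * volume (slitSquare L ∩ strip h k) :=
        setLIntegral_iUnion_le_tsum_mul fun k p hp =>
          geoDist_slitSquare_le hh hpos h0 hL hgap hz hz0 k hp.1 hp.2.2.1
    _ ≤ ∑' k : ℕ, ((4 * (k + 1) : ℕ) : ℝ≥0∞) * volume (strip h k) := by
        gcongr
        exact inter_subset_right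
    _ = ∑' k : ℕ, ENNReal.ofReal (((4 * (k + 1) : ℕ) : ℝ) * (ceiling h k - h k)) := by
        simp only [volume_strip, ENNReal.ofReal_mul (Nat.cast_nonneg _), ENNReal.ofReal_natCast]
    _ < ⊤ := (summable_succ_mul_ceiling_sub hsum).tsum_ofReal_lt_top

end Slits

section AlternatingSlits

/-- The slits `L_k`, of width `1 - ε`, attached alternately to the left side of the square
(`k` even) and to its right side (`k` odd). -/
def alternatingSlit (ε : ℝ) (h : ℕ → ℝ) (k : ℕ) : Set (En 2) :=
  if Even k then {p : En 2 | p 0 ∈ Icc (0 : ℝ) (1 - ε) ∧ p 1 = h k}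
  else {p : En 2 | p 0 ∈ Icc ε 1 ∧ p 1 = h k}

variable {ε : ℝ} {h : ℕ → ℝ}

theorem apply_one_eq_of_mem_alternatingSlit (k : ℕ) (p : En 2) (hp : p ∈ alternatingSlit ε h k) :
    p 1 = h k := by
  unfold alternatingSlit at hp
  split_ifs at hp <;> exact hp.2

theorem exists_notMem_alternatingSlit (hε0 : 0 < ε) (hε1 : ε < 2) (k : ℕ) :
    ∃ x ∈ Ioo (0 : ℝ) 1, !₂[x, h k] ∉ alternatingSlit ε h k := by
  unfold alternatingSlit
  split_ifs
  · exact ⟨1 - ε / 2, ⟨by linarith, by linarith⟩, fun hmem => by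
      have hle : 1 - ε / 2 ≤ 1 - ε := hmem.1.2
      linarith⟩
  · exact ⟨ε / 2, ⟨by linarith, by linarith⟩, fun hmem => by
      have hle : ε ≤ ε / 2 := hmem.1.1
      linarith⟩

end AlternatingSlits

/-- (Example 2.1.) Let `0 < ε < 1/2`, let `(h_k) ⊂ (0,1)` be strictly
decreasing to `0`, and remove from the unit square `(0,1)²` the slits
`L_k = [0,1−ε] × {h_k}` (`k` even) and `L_k = [ε,1] × {h_k}` (`k` odd); let `Ω` be the
resulting domain and fix `(x0,y0) ∈ Ω` with `y0 > h_0`. If `Σ_k k (h_k − h_{k+1}) < ∞`,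
then the geodesic distance in `Ω` to `(x0,y0)` is integrable on `Ω` for the
two-dimensional Lebesgue measure. -/
theorem stmt_17 (ε : ℝ) (hε0 : 0 < ε) (hε1 : ε < 1 / 2)
    (h : ℕ → ℝ) (hh : StrictAnti h) (hmem : ∀ k, h k ∈ Set.Ioo (0:ℝ) 1)
    (hlim : Filter.Tendsto h Filter.atTop (nhds 0))
    (hsum : Summable fun k : ℕ => (k : ℝ) * (h k - h (k + 1)))
    (L : ℕ → Set (En 2))
    (hL : ∀ k, L k =
      if Even k then {p : En 2 | p 0 ∈ Set.Icc (0:ℝ) (1 - ε) ∧ p 1 = h k}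
      else {p : En 2 | p 0 ∈ Set.Icc ε 1 ∧ p 1 = h k})
    (Ω : Set (En 2))
    (hΩ : Ω = {p : En 2 | p 0 ∈ Set.Ioo (0:ℝ) 1 ∧ p 1 ∈ Set.Ioo (0:ℝ) 1} \ ⋃ k, L k)
    (z0 : En 2) (hz0 : z0 ∈ Ω) (hz0y : h 0 < z0 1) :
    (∫⁻ p in Ω, geoDist Ω z0 p ∂volume) < ⊤ := by
  obtain rfl : L = alternatingSlit ε h := funext hL
  subst hΩ
  exact stmt_17_general hh hlim hsum apply_one_eq_of_mem_alternatingSlit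
    (exists_notMem_alternatingSlit hε0 (hε1.trans (by norm_num))) hz0 hz0y
end
end
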